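/- arXiv:2309.05168 — 2 statements merged into one kernel-verified Lean document; each statement's English description precedes it below -/
import Mathlib

section
/- Let m ≥ 1, let W ⊂ ℂ^m be a bounded open neighborhood of 0 with e^{2πi/p}W = W, and let S = ∂W. If Ψ : S → X is continuous and satisfies Ψ(e^{2πi/p} z) = σ(Ψ(z)) for all z ∈ S, then Ψ(S) is a compact σ-invariant subset of X and γ(Ψ(S)) ≥ m. -/
/-!
If `γ(Ψ(S)) < m`, composing `Ψ` with an equivariant map `Ψ(S) → ℂᵏ \ {0}`, `k < m`, gives a nowhere
vanishing equivariant map `S → ℂᵏ \ {0}`; this contradicts the Borsuk–Ulam theorem for `ℤ_p`, whose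
proof computes a degree in two ways. Approximate the map on `S` by a smooth equivariant
`F : ℂᵐ → ℂᵏ ⊂ ℂᵐ`, and perturb `F` to an equivariant `G : ℂᵐ → ℂᵐ` all of whose zeros are regular,
without creating zeros on `S`.

* The origin is a zero of `G`, and the other zeros in `W` come in free `ℤ_p`-orbits along which the
  sign of `det DG` is constant. Hence the signed count of zeros is congruent to `±1` modulo `p`.
* Take `Φ` with `det DΦ` supported near `0` and of nonzero integral. Then `∫_W det D(Φ ∘ G)` is the
  signed count times `∫ det DΦ`. As the integral of a Jacobian is unchanged by compactly supported
  perturbations, it equals `∫_W det D(Φ ∘ F)`, which is `0` because `F` has values in a proper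
  subspace. Hence the signed count is `0`.
-/

noncomputable section

open Real

/-- The `ℤ_p` index `γ(A)` of a (closed, `σ`-invariant) subset `A ⊆ X`: the least `m`
such that there is a continuous map `h : A → ℂ^m \ {0}` with `h (σ x) = e^{2πi/p} h x`,
and `∞` if no such `m` exists. -/
def gammaIdx {X : Type*} [TopologicalSpace X] (p : ℕ) (σ : X → X) (A : Set X) : ℕ∞ :=
  sInf ((fun m : ℕ => (m : ℕ∞)) '' {m : ℕ | ∃ h : X → Fin m → ℂ,
    ContinuousOn h A ∧ (∀ x ∈ A, h x ≠ 0) ∧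
    (∀ x ∈ A, h (σ x) = Complex.exp (2 * π * Complex.I / p) • h x)})

section SphereMaps

open MeasureTheory Set Filter Topology

section Frontier

theorem isCompact_frontier_of_isBounded {α : Type*} [PseudoMetricSpace α] [ProperSpace α]
    {s : Set α} (hs : Bornology.IsBounded s) : IsCompact (frontier s) :=
  hs.isCompact_closure.of_isClosed_subset isClosed_frontier frontier_subset_closure

theorem image_smul_frontier {K α : Type*} [GroupWithZero K] [MulAction K α] [TopologicalSpace α]
    [ContinuousConstSMul K α] {c : K} (hc : c ≠ 0) {s : Set α} (hs : (fun x => c • x) '' s = s) :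
    (fun x => c • x) '' frontier s = frontier s :=
  ((Homeomorph.smulOfNeZero c hc).image_frontier s).trans (congrArg frontier hs)

end Frontier

section Determinant

variable {K V : Type*} [Field K] [AddCommGroup V] [Module K V] [FiniteDimensional K V]

-- Lagrange interpolation of the leading coefficient of the polynomial `t ↦ det (1 + t A)`.
theorem exists_det_eq_sum_mul_det_one_add_smul {s : Finset K}
    (hs : s.card = Module.finrank K V + 1) :
    ∃ w : K → K, ∀ A : V →ₗ[K] V,
      LinearMap.det A = ∑ t ∈ s, w t * LinearMap.det (1 + t • A) := by
  classical
  refine ⟨fun t => (∏ u ∈ s.erase t, (t - u))⁻¹, fun A => ?_⟩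
  let b := Module.finBasis K V
  let M := LinearMap.toMatrix b b A
  let P : Polynomial K := ((Polynomial.X : Polynomial K) • M.map Polynomial.C
    + (1 : Matrix _ _ K).map Polynomial.C).det
  have degree_lt : P.degree < s.card := by
    rw [hs, Polynomial.degree_lt_iff_coeff_zero]
    intro k hk
    refine Polynomial.coeff_eq_zero_of_natDegree_lt
      ((Polynomial.natDegree_det_X_add_C_le M 1).trans_lt ?_)
    simpa using hk
  have coeff_eq : P.coeff (s.card - 1) = LinearMap.det A := by
    simpa [P, M, hs] using Polynomial.coeff_det_X_add_C_card M 1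
  have eval_eq (t : K) : P.eval t = LinearMap.det (1 + t • A) := by
    rw [← LinearMap.det_toMatrix b, ← Polynomial.coe_evalRingHom, RingHom.map_det]
    congr 1
    rw [map_add (LinearMap.toMatrix b b), map_smul, LinearMap.toMatrix_one, add_comm]
    ext i j
    obtain rfl | hij := eq_or_ne i j
    · simp [M, mul_comm t]
    · simp [M, mul_comm t, hij]
  rw [← coeff_eq, Lagrange.coeff_eq_sum (v := id) (Function.injective_id.injOn) degree_lt]
  exact Finset.sum_congr rfl fun t _ => by rw [id, eval_eq, div_eq_inv_mul]; rfl

variable {E : Type*} [NormedAddCommGroup E] [NormedSpace ℝ E] [FiniteDimensional ℝ E]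

theorem det_ne_zero_iff_forall_eq_zero {A : E →L[ℝ] E} :
    A.det ≠ 0 ↔ ∀ v, A v = 0 → v = 0 := by
  rw [ContinuousLinearMap.det, ← isUnit_iff_ne_zero, ← LinearMap.isUnit_iff_isUnit_det,
    LinearMap.isUnit_iff_ker_eq_bot, LinearMap.ker_eq_bot']
  rfl

theorem eventually_det_add_smul_id_ne_zero (A : E →L[ℝ] E) :
    ∀ᶠ c : ℝ in 𝓝[≠] 0, (A + c • ContinuousLinearMap.id ℝ E).det ≠ 0 := by
  have hfin : {c : ℝ | Module.End.HasEigenvalue (A : E →ₗ[ℝ] E) (-c)}.Finite :=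
    (Module.End.finite_hasEigenvalue (A : E →ₗ[ℝ] E)).preimage neg_injective.injOn
  filter_upwards [nhdsNE_le_cofinite _ hfin.compl_mem_cofinite] with c hc
  rw [det_ne_zero_iff_forall_eq_zero]
  intro v hv
  by_contra hne
  refine hc (Module.End.hasEigenvalue_of_hasEigenvector (x := v) ⟨?_, hne⟩)
  rw [Module.End.mem_eigenspace_iff]
  simpa [eq_neg_iff_add_eq_zero] using hv

end Determinant

section Jacobian

variable {E : Type*} [NormedAddCommGroup E] [NormedSpace ℝ E]

/-- The Jacobian determinant of `f` at `x`; it is a junk value where `f` is not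
differentiable. -/
def jacobian (f : E → E) (x : E) : ℝ :=
  (fderiv ℝ f x).det

theorem jacobian_eq_of_hasFDerivAt {f : E → E} {f' : E →L[ℝ] E} {x : E} (h : HasFDerivAt f f' x) :
    jacobian f x = f'.det := by
  rw [jacobian, h.fderiv]

theorem jacobian_congr {f g : E → E} {x : E} (h : f =ᶠ[𝓝 x] g) :
    jacobian f x = jacobian g x := by
  rw [jacobian, jacobian, h.fderiv_eq]

theorem jacobian_comp {f g : E → E} {x : E} (hf : DifferentiableAt ℝ f (g x))
    (hg : DifferentiableAt ℝ g x) :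
    jacobian (f ∘ g) x = jacobian f (g x) * jacobian g x := by
  rw [jacobian, fderiv_comp x hf hg]
  exact LinearMap.det_comp _ _

theorem continuous_jacobian {f : E → E} (hf : ContDiff ℝ 1 f) :
    Continuous (jacobian f) :=
  ContinuousLinearMap.continuous_det.comp (hf.continuous_fderiv one_ne_zero)

theorem jacobian_eq_zero_of_notMem_tsupport [FiniteDimensional ℝ E] [Nontrivial E] {f : E → E}
    {x : E} (hx : x ∉ tsupport f) : jacobian f x = 0 := by
  have : fderiv ℝ f x = 0 := Function.notMem_support.1 fun h => hx (support_fderiv_subset ℝ h)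
  rw [jacobian, this, ContinuousLinearMap.det, ContinuousLinearMap.toLinearMap_zero,
    LinearMap.det_zero, zero_pow Module.finrank_pos.ne']

theorem jacobian_id_add_smul {f : E → E} {x : E} (hf : DifferentiableAt ℝ f x) (t : ℝ) :
    jacobian (fun y => y + t • f y) x =
      LinearMap.det (1 + t • (fderiv ℝ f x : E →ₗ[ℝ] E)) :=
  jacobian_eq_of_hasFDerivAt ((hasFDerivAt_id x).add (hf.hasFDerivAt.const_smul t))

end Jacobian

section NullIntegral

theorem image_eq_self_of_bijective {α : Type*} {f : α → α} (hf : Function.Bijective f) {s : Set α}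
    (hs : ∀ x ∉ s, f x = x) : f '' s = s := by
  have : f '' sᶜ = sᶜ := (image_congr hs).trans (image_id' _)
  rwa [image_compl_eq hf, compl_inj_iff] at this

variable {E : Type*} [NormedAddCommGroup E]

theorem bijective_id_add_of_lipschitzWith [CompleteSpace E] {h : E → E} {c : NNReal}
    (hh : LipschitzWith c h) (hc : c < 1) : Function.Bijective fun x => x + h x := by
  rw [Function.bijective_iff_existsUnique]
  intro y
  have hcon : ContractingWith c fun x => y - h x :=
    ⟨hc, LipschitzWith.of_dist_le_mul fun a b => by
      simpa [dist_eq_norm, norm_sub_rev] using hh.dist_le_mul a b⟩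
  exact ⟨hcon.fixedPoint, (sub_eq_iff_eq_add.1 hcon.fixedPoint_isFixedPt).symm,
    fun x hx => hcon.fixedPoint_unique (sub_eq_iff_eq_add.2 hx.symm)⟩

variable [NormedSpace ℝ E] [FiniteDimensional ℝ E] [MeasurableSpace E] [BorelSpace E]
  (μ : Measure E) [μ.IsAddHaarMeasure]

theorem eventually_setIntegral_jacobian_id_add_smul {f : E → E} (hf : ContDiff ℝ 1 f)
    (hfc : HasCompactSupport f) :
    ∀ᶠ t : ℝ in 𝓝 0,
      ∫ x in tsupport f, jacobian (fun y => y + t • f y) x ∂μ = μ.real (tsupport f) := by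
  have hm : MeasurableSet (tsupport f) := (isClosed_tsupport f).measurableSet
  obtain ⟨C, hC⟩ := hf.lipschitzWith_of_hasCompactSupport hfc one_ne_zero
  have bijective : ∀ᶠ t : ℝ in 𝓝 0, Function.Bijective fun x => x + t • f x := by
    have hlt : ∀ᶠ t : ℝ in 𝓝 0, ‖t‖₊ * C < 1 := by
      have hcont : Continuous fun t : ℝ => ‖t‖₊ * C := by fun_prop
      exact hcont.continuousAt.eventually_lt_const (by simp)
    filter_upwards [hlt] with t ht
    exact bijective_id_add_of_lipschitzWith ((lipschitzWith_smul t).comp hC) ht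
  have jacobian_pos : ∀ᶠ t : ℝ in 𝓝 0, ∀ x ∈ tsupport f,
      0 < jacobian (fun y => y + t • f y) x := by
    refine hfc.eventually_forall_of_forall_eventually fun x _ => ?_
    simp only [jacobian_id_add_smul (hf.differentiable one_ne_zero _)]
    have hcont : Continuous fun q : ℝ × E =>
        (ContinuousLinearMap.id ℝ E + q.1 • fderiv ℝ f q.2).det :=
      ContinuousLinearMap.continuous_det.comp (by
        have := hf.continuous_fderiv one_ne_zero
        fun_prop)
    exact hcont.continuousAt.eventually_const_lt (by simp [ContinuousLinearMap.det])
  filter_upwards [bijective, jacobian_pos] with t hbij hpos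
  have hdiff (x : E) : DifferentiableAt ℝ (fun y => y + t • f y) x :=
    differentiableAt_id.add ((hf.differentiable one_ne_zero x).const_smul t)
  have himage : (fun x => x + t • f x) '' tsupport f = tsupport f :=
    image_eq_self_of_bijective hbij fun x hx => by
      rw [image_eq_zero_of_notMem_tsupport hx, smul_zero, add_zero]
  calc ∫ x in tsupport f, jacobian (fun y => y + t • f y) x ∂μ
      = ∫ x in tsupport f, |jacobian (fun y => y + t • f y) x| • (1 : ℝ) ∂μ :=
        setIntegral_congr_fun hm fun x hx => by simp [abs_of_pos (hpos x hx)]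
    _ = ∫ _ in (fun x => x + t • f x) '' tsupport f, (1 : ℝ) ∂μ :=
        (integral_image_eq_integral_abs_det_fderiv_smul μ hm
          (fun x _ => (hdiff x).hasFDerivAt.hasFDerivWithinAt) hbij.1.injOn fun _ => (1 : ℝ)).symm
    _ = μ.real (tsupport f) := by simp [himage]

/-- `∫ det (1 + t Df)` is a polynomial in `t` which is constant near `t = 0`, and its leading
coefficient is `∫ det Df`. -/
theorem integral_jacobian_eq_zero [Nontrivial E] {f : E → E} (hf : ContDiff ℝ 1 f)
    (hfc : HasCompactSupport f) : ∫ x, jacobian f x ∂μ = 0 := by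
  obtain ⟨s, hs, hcard⟩ := (infinite_of_mem_nhds (0 : ℝ)
    (eventually_setIntegral_jacobian_id_add_smul μ hf hfc)).exists_subset_card_eq
    (Module.finrank ℝ E + 1)
  obtain ⟨w, hw⟩ := exists_det_eq_sum_mul_det_one_add_smul (V := E) hcard
  have sum_w : ∑ t ∈ s, w t = 0 := by
    simpa [Module.finrank_pos.ne'] using (hw 0).symm
  have hcont (t : ℝ) : Continuous (jacobian fun y => y + t • f y) :=
    continuous_jacobian (contDiff_id.add (hf.const_smul t))
  calc ∫ x, jacobian f x ∂μ
      = ∫ x in tsupport f, jacobian f x ∂μ :=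
        (setIntegral_eq_integral_of_forall_compl_eq_zero fun x hx =>
          jacobian_eq_zero_of_notMem_tsupport hx).symm
    _ = ∫ x in tsupport f, ∑ t ∈ s, w t * jacobian (fun y => y + t • f y) x ∂μ := by
        simp only [jacobian_id_add_smul (hf.differentiable one_ne_zero _), ← hw]
        rfl
    _ = ∑ t ∈ s, w t * ∫ x in tsupport f, jacobian (fun y => y + t • f y) x ∂μ := by
        rw [integral_finsetSum _ fun t _ =>
          ((hcont t).const_mul (w t)).continuousOn.integrableOn_compact hfc]
        simp only [integral_const_mul]
    _ = ∑ t ∈ s, w t * μ.real (tsupport f) :=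
        Finset.sum_congr rfl fun t ht => congrArg (w t * ·) (hs ht)
    _ = 0 := by rw [← Finset.sum_mul, sum_w, zero_mul]

end NullIntegral

section HomotopyInvariance

variable {E : Type*} [NormedAddCommGroup E] [NormedSpace ℝ E] [FiniteDimensional ℝ E]

theorem exists_contDiff_cutoff (n : ℕ∞) {K U : Set E} (hK : IsCompact K) (hU : IsOpen U)
    (hKU : K ⊆ U) :
    ∃ χ : E → ℝ, ContDiff ℝ n χ ∧ HasCompactSupport χ ∧ tsupport χ ⊆ U ∧
      (∀ x ∈ K, ∀ᶠ y in 𝓝 x, χ y = 1) ∧ ∀ x, χ x ∈ Icc (0 : ℝ) 1 := by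
  obtain ⟨L, hL, hKL, hLU⟩ := exists_compact_between hK hU hKU
  obtain ⟨χ, hone, hzero, hIcc⟩ := exists_contMDiffMap_one_nhds_of_subset_interior (n := n)
    (modelWithCornersSelf ℝ E) hK.isClosed hKL
  have hsupp : tsupport χ ⊆ L :=
    closure_minimal (fun x hx => by_contra fun h => hx (hzero x h)) hL.isClosed
  exact ⟨χ, χ.contMDiff.contDiff, hL.of_isClosed_subset (isClosed_tsupport _) hsupp,
    hsupp.trans hLU, fun x hx => hone.filter_mono (nhds_le_nhdsSet hx), hIcc⟩

variable [MeasurableSpace E] [BorelSpace E] (μ : Measure E) [μ.IsAddHaarMeasure]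

theorem integral_jacobian_sub_eq_zero [Nontrivial E] {f g : E → E} (hf : ContDiff ℝ 1 f)
    (hg : ContDiff ℝ 1 g) (hfg : HasCompactSupport (f - g)) :
    ∫ x, (jacobian f x - jacobian g x) ∂μ = 0 := by
  obtain ⟨χ, hχ, hχc, -, hχ_one, -⟩ := exists_contDiff_cutoff 1 hfg isOpen_univ (subset_univ _)
  have jacobian_smul {h : E → E} {x : E} (hx : x ∈ tsupport (f - g)) :
      jacobian (χ • h) x = jacobian h x :=
    jacobian_congr ((hχ_one x hx).mono fun y hy => by rw [Pi.smul_apply', hy, one_smul])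
  have hsub (x : E) : jacobian f x - jacobian g x = jacobian (χ • f) x - jacobian (χ • g) x := by
    by_cases hx : x ∈ tsupport (f - g)
    · rw [jacobian_smul hx, jacobian_smul hx]
    · have hev : f =ᶠ[𝓝 x] g := by
        simpa [EventuallyEq, sub_eq_zero] using notMem_tsupport_iff_eventuallyEq.1 hx
      have hχev : χ • f =ᶠ[𝓝 x] χ • g := (EventuallyEq.refl _ χ).smul hev
      rw [jacobian_congr hev, jacobian_congr hχev, sub_self, sub_self]
  have integrable {h : E → E} (hh : ContDiff ℝ 1 h) : Integrable (jacobian (χ • h)) μ :=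
    (continuous_jacobian (hχ.smul hh)).integrable_of_hasCompactSupport
      (hχc.smul_right.mono' fun x hx =>
        by_contra fun hx' => hx (jacobian_eq_zero_of_notMem_tsupport hx'))
  simp only [hsub]
  rw [integral_sub (integrable hf) (integrable hg),
    integral_jacobian_eq_zero μ (hχ.smul hf) hχc.smul_right,
    integral_jacobian_eq_zero μ (hχ.smul hg) hχc.smul_right, sub_self]

theorem setIntegral_jacobian_eq_of_tsupport_sub_subset [Nontrivial E] {f g : E → E}
    (hf : ContDiff ℝ 1 f) (hg : ContDiff ℝ 1 g) {W : Set E} (hW : Bornology.IsBounded W)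
    (hfg : tsupport (f - g) ⊆ W) :
    ∫ x in W, jacobian f x ∂μ = ∫ x in W, jacobian g x ∂μ := by
  have integrableOn {h : E → E} (hh : ContDiff ℝ 1 h) : IntegrableOn (jacobian h) W μ :=
    ((continuous_jacobian hh).continuousOn.integrableOn_compact hW.isCompact_closure).mono_set
      subset_closure
  rw [← sub_eq_zero, ← integral_sub (integrableOn hf) (integrableOn hg),
    setIntegral_eq_integral_of_forall_compl_eq_zero]
  · exact integral_jacobian_sub_eq_zero μ hf hg
      (Metric.isCompact_of_isClosed_isBounded (isClosed_tsupport _) (hW.subset hfg))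
  · intro x hx
    rw [sub_eq_zero]
    refine jacobian_congr ?_
    simpa [EventuallyEq, sub_eq_zero] using notMem_tsupport_iff_eventuallyEq.1 (mt (@hfg x) hx)

-- `∫ x in W, jacobian (Φ ∘ F) x` is the degree of `F` on `W` times the integral of `jacobian Φ`.
theorem setIntegral_jacobian_comp_eq [Nontrivial E] {F G Φ : E → E} (hF : ContDiff ℝ 1 F)
    (hG : ContDiff ℝ 1 G) (hΦ : ContDiff ℝ 1 Φ) {W : Set E} (hW : IsOpen W)
    (hWb : Bornology.IsBounded W) {δ : ℝ}
    (hΦδ : Function.support (jacobian Φ) ⊆ Metric.ball 0 δ)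
    (hFG : ∀ z ∈ frontier W, ‖G z - F z‖ + δ < ‖F z‖) :
    ∫ x in W, jacobian (Φ ∘ G) x ∂μ = ∫ x in W, jacobian (Φ ∘ F) x ∂μ := by
  let K := {z ∈ closure W | ‖F z‖ ≤ ‖G z - F z‖ + δ}
  have hK : IsCompact K :=
    hWb.isCompact_closure.inter_right (isClosed_le hF.continuous.norm
      ((hG.continuous.sub hF.continuous).norm.add continuous_const))
  have hKW : K ⊆ W := fun z hz => by
    by_contra h
    exact hz.2.not_gt (hFG z (hW.frontier_eq ▸ ⟨hz.1, h⟩))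
  obtain ⟨χ, hχ, -, hχW, hχ_one, hχ_Icc⟩ := exists_contDiff_cutoff 1 hK hW hKW
  let H : E → E := F + χ • (G - F)
  have hH : ContDiff ℝ 1 H := hF.add (hχ.smul (hG.sub hF))
  have hG_eq_H : ∀ x ∈ W, jacobian (Φ ∘ G) x = jacobian (Φ ∘ H) x := by
    intro x hx
    by_cases hxK : x ∈ K
    · refine jacobian_congr ?_
      filter_upwards [hχ_one x hxK] with y hy
      simp [H, hy]
    · have hlt : ‖G x - F x‖ + δ < ‖F x‖ := not_le.1 fun h => hxK ⟨subset_closure hx, h⟩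
      have jacobian_eq_zero {J : E → E} (hJ : ContDiff ℝ 1 J)
          (hJx : ‖J x - F x‖ ≤ ‖G x - F x‖) : jacobian (Φ ∘ J) x = 0 := by
        have hJδ : ¬‖J x‖ < δ := by
          linarith [norm_sub_norm_le (F x) (J x), norm_sub_rev (F x) (J x)]
        rw [jacobian_comp (hΦ.differentiable one_ne_zero _) (hJ.differentiable one_ne_zero _),
          Function.notMem_support.1 fun h => hJδ (mem_ball_zero_iff.1 (hΦδ h)), zero_mul]
      rw [jacobian_eq_zero hG le_rfl, jacobian_eq_zero hH]
      simpa [H, norm_smul, abs_of_nonneg (hχ_Icc x).1] using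
        mul_le_of_le_one_left (norm_nonneg _) (hχ_Icc x).2
  have hHF : tsupport (Φ ∘ H - Φ ∘ F) ⊆ W :=
    (closure_mono (Function.support_subset_iff'.2 fun x hx => by
      simp [H, Function.notMem_support.1 hx])).trans hχW
  rw [setIntegral_congr_fun hW.measurableSet hG_eq_H]
  exact setIntegral_jacobian_eq_of_tsupport_sub_subset μ (hΦ.comp hH) (hΦ.comp hF) hWb hHF

end HomotopyInvariance

section ConcentratedJacobian

theorem exists_contDiff_support_deriv_subset_ball {ε : ℝ} (hε : 0 < ε) :
    ∃ s : ℝ → ℝ, ContDiff ℝ 1 s ∧ 0 ≤ deriv s ∧ 0 < deriv s 0 ∧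
      Function.support (deriv s) ⊆ Metric.ball 0 ε := by
  let β : ContDiffBump (0 : ℝ) := ⟨ε / 2, ε, by positivity, half_lt_self hε⟩
  let s : ℝ → ℝ := fun x => ∫ t in (0 : ℝ)..x, β t
  have hderiv (x : ℝ) : HasDerivAt s (β x) x :=
    (β.continuous.integral_hasStrictDerivAt 0 x).hasDerivAt
  have deriv_eq : deriv s = β := funext fun x => (hderiv x).deriv
  refine ⟨s, contDiff_one_iff_deriv.2 ⟨fun x => (hderiv x).differentiableAt, ?_⟩, ?_⟩
  · exact deriv_eq ▸ β.continuous
  · rw [deriv_eq]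
    exact ⟨fun x => β.nonneg, β.pos_of_mem_ball (Metric.mem_ball_self hε), β.support_eq.subset⟩

theorem jacobian_pi {ι : Type*} [Fintype ι] {s : ℝ → ℝ} (hs : Differentiable ℝ s) (y : ι → ℝ) :
    jacobian (fun (y : ι → ℝ) i => s (y i)) y = ∏ i, deriv s (y i) := by
  have hderiv : HasFDerivAt (fun (y : ι → ℝ) i => s (y i))
      (ContinuousLinearMap.pi fun i => fderiv ℝ s (y i) ∘L ContinuousLinearMap.proj i) y :=
    hasFDerivAt_pi.2 fun i => (hs (y i)).hasFDerivAt.comp y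
      (ContinuousLinearMap.proj (R := ℝ) (φ := fun _ : ι => ℝ) i).hasFDerivAt
  rw [jacobian_eq_of_hasFDerivAt hderiv, ContinuousLinearMap.det_pi]
  refine Finset.prod_congr rfl fun i _ => ?_
  rw [ContinuousLinearMap.det, LinearMap.det_ring]
  rfl

variable {E F : Type*} [NormedAddCommGroup E] [NormedSpace ℝ E]
  [NormedAddCommGroup F] [NormedSpace ℝ F]

theorem jacobian_conj (e : E ≃L[ℝ] F) {f : F → F} (hf : Differentiable ℝ f) (x : E) :
    jacobian (fun y => e.symm (f (e y))) x = jacobian f (e x) := by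
  have hderiv : HasFDerivAt (fun y => e.symm (f (e y)))
      ((e.symm : F →L[ℝ] E) ∘L fderiv ℝ f (e x) ∘L (e : E →L[ℝ] F)) x :=
    e.symm.hasFDerivAt.comp x ((hf (e x)).hasFDerivAt.comp x e.hasFDerivAt)
  rw [jacobian_eq_of_hasFDerivAt hderiv]
  exact LinearMap.det_conj (fderiv ℝ f (e x) : F →ₗ[ℝ] F) (e.symm.toLinearEquiv)

theorem exists_contDiff_support_jacobian_subset_ball [FiniteDimensional ℝ E] [MeasurableSpace E]
    [BorelSpace E] (μ : Measure E) [μ.IsAddHaarMeasure] {ε : ℝ} (hε : 0 < ε) :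
    ∃ Φ : E → E, ContDiff ℝ 1 Φ ∧ Function.support (jacobian Φ) ⊆ Metric.ball 0 ε ∧
      0 < ∫ y, jacobian Φ y ∂μ := by
  let e := (Module.finBasis ℝ E).equivFunL
  obtain ⟨r, hr, hball⟩ : ∃ r > 0, Metric.ball 0 r ⊆ e.symm ⁻¹' Metric.ball 0 ε :=
    Metric.mem_nhds_iff.1 (e.symm.continuous.continuousAt.preimage_mem_nhds
      (by simpa using Metric.ball_mem_nhds (0 : E) hε))
  obtain ⟨s, hs, hs_nonneg, hs_pos, hs_supp⟩ := exists_contDiff_support_deriv_subset_ball hr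
  let Φ : E → E := fun y => e.symm fun i => s (e y i)
  have hΦ : ContDiff ℝ 1 Φ := e.symm.contDiff.comp
    (contDiff_pi.2 fun i => hs.comp ((contDiff_apply ℝ ℝ i).comp e.contDiff))
  have hjac (y : E) : jacobian Φ y = ∏ i, deriv s (e y i) := by
    rw [← jacobian_pi (hs.differentiable one_ne_zero)]
    refine jacobian_conj e (f := fun z i => s (z i)) ?_ y
    exact differentiable_pi.2 fun i =>
      (hs.differentiable one_ne_zero).comp (differentiable_apply i)
  have hsupp : Function.support (jacobian Φ) ⊆ Metric.ball 0 ε := by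
    intro y hy
    rw [Function.mem_support, hjac, Finset.prod_ne_zero_iff] at hy
    rw [← e.symm_apply_apply y]
    refine hball (mem_ball_zero_iff.2 ((pi_norm_lt_iff hr).2 fun i => ?_))
    exact mem_ball_zero_iff.1 (hs_supp (hy i (Finset.mem_univ i)))
  refine ⟨Φ, hΦ, hsupp, Continuous.integral_pos_of_hasCompactSupport_nonneg_nonzero (x := 0)
    (continuous_jacobian hΦ) ?_ ?_ ?_⟩
  · exact HasCompactSupport.of_support_subset_isCompact (isCompact_closedBall 0 ε)
      (hsupp.trans Metric.ball_subset_closedBall)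
  · exact fun y => hjac y ▸ Finset.prod_nonneg fun i _ => hs_nonneg _
  · rw [hjac, map_zero]
    exact Finset.prod_ne_zero_iff.2 fun i _ => hs_pos.ne'

end ConcentratedJacobian

section SignedCount

variable {E : Type*} [NormedAddCommGroup E] [NormedSpace ℝ E]

/-- All zeros of `f` in `s` are regular, i.e. `0` is a regular value of `f` on `s`. -/
def RegularZerosOn (f : E → E) (s : Set E) : Prop :=
  ∀ z ∈ s, f z = 0 → jacobian f z ≠ 0

/-- The number of points of `Z`, each counted with the sign of the Jacobian of `f`. When `Z` is
the set of zeros of `f` in a bounded open set and these are regular, this is the degree of `f`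
there. -/
def signedCount (f : E → E) (Z : Finset E) : ℤ :=
  ∑ z ∈ Z, (SignType.sign (jacobian f z) : ℤ)

theorem exists_hasStrictFDerivAt_equiv [FiniteDimensional ℝ E] {f : E → E} (hf : ContDiff ℝ 1 f)
    {z : E} (hz : jacobian f z ≠ 0) :
    ∃ e : E ≃L[ℝ] E, HasStrictFDerivAt f (e : E →L[ℝ] E) z := by
  rw [jacobian] at hz
  refine ⟨(fderiv ℝ f z).toContinuousLinearEquivOfDetNeZero hz, ?_⟩
  rw [ContinuousLinearMap.coe_toContinuousLinearEquivOfDetNeZero]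
  exact hf.contDiffAt.hasStrictFDerivAt one_ne_zero

theorem RegularZerosOn.finite [FiniteDimensional ℝ E] {f : E → E} (hf : ContDiff ℝ 1 f) {s : Set E}
    (hs : IsCompact s) (hreg : RegularZerosOn f s) : {z | z ∈ s ∧ f z = 0}.Finite := by
  refine (hs.inter_right (isClosed_eq hf.continuous continuous_const)).finite
    (isDiscrete_iff_nhdsNE.2 fun z hz => ?_)
  obtain ⟨e, he⟩ := exists_hasStrictFDerivAt_equiv hf (hreg z hz.1 hz.2)
  have : ∀ᶠ x in 𝓝[≠] z, f x ≠ 0 := he.hasFDerivAt.eventually_ne ⟨_, e.antilipschitz⟩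
  rw [← disjoint_iff]
  refine disjoint_principal_right.2 ?_
  filter_upwards [this] with x hx hx' using hx hx'.2

theorem exists_isOpen_injOn_image_mem_nhds [FiniteDimensional ℝ E] {f : E → E}
    (hf : ContDiff ℝ 1 f) {z : E} (hz : jacobian f z ≠ 0) {N : Set E} (hN : N ∈ 𝓝 z) :
    ∃ V ⊆ N, IsOpen V ∧ z ∈ V ∧ InjOn f V ∧ f '' V ∈ 𝓝 (f z) ∧
      ∀ x ∈ V, SignType.sign (jacobian f x) = SignType.sign (jacobian f z) := by
  obtain ⟨e, he⟩ := exists_hasStrictFDerivAt_equiv hf hz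
  let φ := he.toOpenPartialHomeomorph f
  have sign_eq : ContinuousAt (fun x => SignType.sign (jacobian f x)) z :=
    (continuousAt_sign_of_ne_zero hz).comp (continuous_jacobian hf).continuousAt
  rw [ContinuousAt, nhds_discrete SignType, tendsto_pure] at sign_eq
  obtain ⟨V, hV, hVo, hzV⟩ := mem_nhds_iff.1 (inter_mem (inter_mem
    (φ.open_source.mem_nhds he.mem_toOpenPartialHomeomorph_source) hN) sign_eq)
  exact ⟨V, fun x hx => (hV hx).1.2, hVo, hzV, φ.injOn.mono fun x hx => (hV hx).1.1,
    he.map_nhds_eq_of_equiv ▸ image_mem_map (hVo.mem_nhds hzV), fun x hx => (hV hx).2⟩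

theorem exists_pairwiseDisjoint_isOpen_injOn [FiniteDimensional ℝ E] {f : E → E}
    (hf : ContDiff ℝ 1 f) {W : Set E} (hW : IsOpen W) {Z : Finset E} (hZW : (Z : Set E) ⊆ W)
    (hZ : ∀ z ∈ Z, jacobian f z ≠ 0) :
    ∃ V : E → Set E, (Z : Set E).PairwiseDisjoint V ∧ ∀ z ∈ Z, V z ⊆ W ∧ IsOpen (V z) ∧ z ∈ V z ∧
      InjOn f (V z) ∧ f '' V z ∈ 𝓝 (f z) ∧
      ∀ x ∈ V z, SignType.sign (jacobian f x) = SignType.sign (jacobian f z) := by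
  obtain ⟨U, hU, hUdisj⟩ := Z.finite_toSet.t2_separation
  choose! V hVUW hV using fun z (hz : z ∈ Z) => exists_isOpen_injOn_image_mem_nhds hf (hZ z hz)
    (inter_mem ((hU z).2.mem_nhds (hU z).1) (hW.mem_nhds (hZW hz)))
  exact ⟨V, fun a ha b hb hab => (hUdisj ha hb hab).mono ((hVUW a ha).trans inter_subset_left)
    ((hVUW b hb).trans inter_subset_left),
    fun z hz => ⟨(hVUW z hz).trans inter_subset_right, hV z hz⟩⟩

variable [FiniteDimensional ℝ E] [MeasurableSpace E] [BorelSpace E] (μ : Measure E)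
  [μ.IsAddHaarMeasure]

theorem setIntegral_comp_mul_jacobian_eq_sign_mul {f : E → E} (hf : Differentiable ℝ f) {V : Set E}
    (hV : MeasurableSet V) (hinj : InjOn f V) {σ : SignType}
    (hσ : ∀ x ∈ V, SignType.sign (jacobian f x) = σ) {φ : E → ℝ}
    (hφ : Function.support φ ⊆ f '' V) :
    ∫ x in V, φ (f x) * jacobian f x ∂μ = σ * ∫ y, φ y ∂μ := by
  calc ∫ x in V, φ (f x) * jacobian f x ∂μ
      = ∫ x in V, σ * (|jacobian f x| • φ (f x)) ∂μ :=
        setIntegral_congr_fun hV fun x hx => by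
          rw [← hσ x hx]
          nth_rw 1 [← sign_mul_abs (jacobian f x)]
          rw [smul_eq_mul]
          ring
    _ = σ * ∫ y in f '' V, φ y ∂μ := by
        rw [integral_const_mul, integral_image_eq_integral_abs_det_fderiv_smul μ hV
          (fun x _ => (hf x).hasFDerivAt.hasFDerivWithinAt) hinj]
        rfl
    _ = σ * ∫ y, φ y ∂μ := by
        rw [setIntegral_eq_integral_of_forall_compl_eq_zero fun y hy =>
          Function.notMem_support.1 fun h => hy (hφ h)]

theorem exists_setIntegral_comp_mul_jacobian_eq_signedCount_mul {f : E → E} (hf : ContDiff ℝ 1 f)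
    {W : Set E} (hW : IsOpen W) (hWb : Bornology.IsBounded W) (hreg : RegularZerosOn f W)
    {Z : Finset E} (hZW : (Z : Set E) ⊆ W) (hZ : ∀ z, z ∈ Z ↔ z ∈ closure W ∧ f z = 0) :
    ∃ ε > 0, ∀ φ : E → ℝ, Continuous φ → Function.support φ ⊆ Metric.ball 0 ε →
      ∫ x in W, φ (f x) * jacobian f x ∂μ = signedCount f Z * ∫ y, φ y ∂μ := by
  obtain ⟨V, hVdisj, hV⟩ := exists_pairwiseDisjoint_isOpen_injOn hf hW hZW fun z hz =>
    hreg z (hZW hz) ((hZ z).1 hz).2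
  choose hVsub hVo hzV hinj himage hsign using hV
  have hVW : (⋃ z ∈ Z, V z) ⊆ W := iUnion₂_subset hVsub
  have himage_zero : ∀ z ∈ Z, f '' V z ∈ 𝓝 (0 : E) := fun z hz =>
    ((hZ z).1 hz).2 ▸ himage z hz
  have image_compl_mem : (f '' (closure W \ ⋃ z ∈ Z, V z))ᶜ ∈ 𝓝 (0 : E) := by
    have hcompact : IsCompact (closure W \ ⋃ z ∈ Z, V z) :=
      hWb.isCompact_closure.diff (isOpen_biUnion hVo)
    refine (hcompact.image hf.continuous).isClosed.compl_mem_nhds ?_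
    rintro ⟨x, hx, hx0⟩
    have hxZ := (hZ x).2 ⟨hx.1, hx0⟩
    exact hx.2 (mem_biUnion hxZ (hzV x hxZ))
  obtain ⟨ε, hε, hball⟩ := Metric.mem_nhds_iff.1
    (inter_mem ((Filter.biInter_finset_mem Z).2 himage_zero) image_compl_mem)
  refine ⟨ε, hε, fun φ hφ hφε => ?_⟩
  have hint : IntegrableOn (fun x => φ (f x) * jacobian f x) (closure W) μ :=
    ((hφ.comp hf.continuous).mul (continuous_jacobian hf)).continuousOn.integrableOn_compact
      hWb.isCompact_closure
  calc ∫ x in W, φ (f x) * jacobian f x ∂μ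
      = ∫ x in ⋃ z ∈ Z, V z, φ (f x) * jacobian f x ∂μ := by
        refine setIntegral_eq_of_subset_of_forall_sdiff_eq_zero hW.measurableSet hVW fun x hx => ?_
        have : φ (f x) = 0 := Function.notMem_support.1 fun h =>
          (hball (hφε h)).2 ⟨x, ⟨subset_closure hx.1, hx.2⟩, rfl⟩
        rw [this, zero_mul]
    _ = ∑ z ∈ Z, ∫ x in V z, φ (f x) * jacobian f x ∂μ :=
        integral_biUnion_finset Z (fun z hz => (hVo z hz).measurableSet) hVdisj fun z hz =>
          hint.mono_set (((subset_biUnion_of_mem hz).trans hVW).trans subset_closure)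
    _ = ∑ z ∈ Z, (SignType.sign (jacobian f z) : ℝ) * ∫ y, φ y ∂μ :=
        Finset.sum_congr rfl fun z hz => setIntegral_comp_mul_jacobian_eq_sign_mul μ
          (hf.differentiable one_ne_zero) (hVo z hz).measurableSet (hinj z hz) (hsign z hz)
          fun y hy => mem_iInter₂.1 (hball (hφε hy)).1 z hz
    _ = signedCount f Z * ∫ y, φ y ∂μ := by
        rw [← Finset.sum_mul, signedCount]
        push_cast
        rfl

end SignedCount

section HomotopyCount

variable {E : Type*} [NormedAddCommGroup E] [NormedSpace ℝ E] [FiniteDimensional ℝ E]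

theorem signedCount_eq_zero [Nontrivial E] {F G : E → E} (hF : ContDiff ℝ 1 F)
    (hG : ContDiff ℝ 1 G) (hF_jac : ∀ x, jacobian F x = 0) {W : Set E} (hW : IsOpen W)
    (hWb : Bornology.IsBounded W) (hFG : ∀ z ∈ frontier W, ‖G z - F z‖ < ‖F z‖)
    (hreg : RegularZerosOn G W) {Z : Finset E} (hZ : ∀ z, z ∈ Z ↔ z ∈ closure W ∧ G z = 0) :
    signedCount G Z = 0 := by
  borelize E
  let μ : Measure E := Measure.addHaar
  have hZW : (Z : Set E) ⊆ W := fun z hz => by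
    obtain ⟨hzW, hGz⟩ := (hZ z).1 hz
    by_contra h
    simpa [hGz] using hFG z (hW.frontier_eq ▸ ⟨hzW, h⟩)
  obtain ⟨δ, hδ, hδFG⟩ : ∃ δ > 0, ∀ z ∈ frontier W, δ ≤ ‖F z‖ - ‖G z - F z‖ :=
    (isCompact_frontier_of_isBounded hWb).exists_forall_le'
      (hF.continuous.norm.sub (hG.continuous.sub hF.continuous).norm).continuousOn
      fun z hz => sub_pos.2 (hFG z hz)
  obtain ⟨ε, hε, hcount⟩ :=
    exists_setIntegral_comp_mul_jacobian_eq_signedCount_mul μ hG hW hWb hreg hZW hZ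
  obtain ⟨Φ, hΦ, hΦ_supp, hΦ_pos⟩ :=
    exists_contDiff_support_jacobian_subset_ball μ (lt_min hε (half_pos hδ))
  have hcomp {H : E → E} (hH : ContDiff ℝ 1 H) (x : E) :
      jacobian (Φ ∘ H) x = jacobian Φ (H x) * jacobian H x :=
    jacobian_comp (hΦ.differentiable one_ne_zero _) (hH.differentiable one_ne_zero _)
  have : signedCount G Z * ∫ y, jacobian Φ y ∂μ = 0 := by
    calc signedCount G Z * ∫ y, jacobian Φ y ∂μ
        = ∫ x in W, jacobian (Φ ∘ G) x ∂μ := by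
          simp only [hcomp hG]
          exact (hcount _ (continuous_jacobian hΦ)
            (hΦ_supp.trans (Metric.ball_subset_ball (min_le_left _ _)))).symm
      _ = ∫ x in W, jacobian (Φ ∘ F) x ∂μ :=
          setIntegral_jacobian_comp_eq μ hF hG hΦ hW hWb
            (hΦ_supp.trans (Metric.ball_subset_ball (min_le_right _ _)))
            fun z hz => by linarith [hδFG z hz]
      _ = 0 := by simp [hcomp hF, hF_jac]
  exact_mod_cast (mul_eq_zero.1 this).resolve_right hΦ_pos.ne'

end HomotopyCount

section EquivariantZeros

theorem pow_smul_mem_of_smul_mem {M α : Type*} [Monoid M] [MulAction M α] {a : M} {s : Set α}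
    (hs : ∀ x ∈ s, a • x ∈ s) {x : α} (hx : x ∈ s) (n : ℕ) : a ^ n • x ∈ s := by
  induction n with
  | zero => simpa using hx
  | succ n ih => simpa only [pow_succ', mul_smul] using hs _ ih

theorem dvd_sum_of_smul_mem {K V R : Type*} [Field K] [AddCommGroup V] [Module K V]
    [CommSemiring R] {ζ : K} {p : ℕ} (hp : 0 < p) (hζ : IsPrimitiveRoot ζ p) {f : V → R}
    (hf : ∀ z, f (ζ • z) = f z) {T : Finset V} (hT0 : 0 ∉ T) (hT : ∀ z ∈ T, ζ • z ∈ T) :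
    (p : R) ∣ ∑ z ∈ T, f z := by
  classical
  induction T using Finset.strongInduction with
  | H T ih =>
    obtain rfl | ⟨z, hz⟩ := T.eq_empty_or_nonempty
    · simp
    have hz0 : z ≠ 0 := ne_of_mem_of_not_mem hz hT0
    let orbit := (Finset.range p).image fun j => ζ ^ j • z
    have pow_mem_orbit (j : ℕ) : ζ ^ j • z ∈ orbit := by
      refine Finset.mem_image.2 ⟨j % p, Finset.mem_range.2 (j.mod_lt hp), ?_⟩
      rw [hζ.eq_orderOf, pow_mod_orderOf]
    have orbit_subset : orbit ⊆ T :=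
      Finset.image_subset_iff.2 fun j _ =>
        Finset.mem_coe.1 (pow_smul_mem_of_smul_mem (s := (T : Set V)) hT hz j)
    have mem_orbit_of_smul_mem {w : V} (hw : ζ • w ∈ orbit) : w ∈ orbit := by
      obtain ⟨j, -, hj⟩ := Finset.mem_image.1 hw
      have : ζ ^ (p - 1 + j) • z = w := by
        rw [pow_add, mul_smul, hj, smul_smul, ← pow_succ, Nat.sub_add_cancel hp, hζ.pow_eq_one,
          one_smul]
      exact this ▸ pow_mem_orbit _
    have hrest : (p : R) ∣ ∑ w ∈ T \ orbit, f w := by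
      refine ih _ (Finset.sdiff_ssubset orbit_subset ⟨z, by simpa using pow_mem_orbit 0⟩)
        (fun h => hT0 (Finset.mem_sdiff.1 h).1) fun w hw => ?_
      rw [Finset.mem_sdiff] at hw ⊢
      exact ⟨hT w hw.1, fun h => hw.2 (mem_orbit_of_smul_mem h)⟩
    have horbit : ∑ w ∈ orbit, f w = p * f z := by
      have f_pow (j : ℕ) : f (ζ ^ j • z) = f z := by
        induction j with
        | zero => simp
        | succ j ihj => rw [pow_succ', mul_smul, hf, ihj]
      rw [Finset.sum_image fun i hi j hj hij => hζ.pow_inj (Finset.mem_range.1 hi)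
        (Finset.mem_range.1 hj) (smul_left_injective K hz0 hij)]
      simp [f_pow]
    rw [← Finset.sum_sdiff orbit_subset, horbit]
    exact dvd_add hrest (dvd_mul_right _ _)

variable {𝕜 E : Type*} [RCLike 𝕜] [NormedAddCommGroup E] [NormedSpace 𝕜 E] [NormedSpace ℝ E]
  [IsScalarTower ℝ 𝕜 E]

theorem jacobian_smul_eq {G : E → E} (hG : Differentiable ℝ G) {a : 𝕜} (ha : a ≠ 0)
    (h : ∀ z, G (a • z) = a • G z) (z : E) : jacobian G (a • z) = jacobian G z := by
  let e : E ≃L[ℝ] E := ContinuousLinearEquiv.smulLeft (Units.mk0 a ha)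
  have : (fun y => e.symm (G (e y))) = G := funext fun y => e.symm_apply_eq.2 (h y)
  exact (jacobian_conj e hG z).symm.trans (by rw [this])

theorem signedCount_ne_zero {ζ : 𝕜} {p : ℕ} (hp : 1 < p) (hζ : IsPrimitiveRoot ζ p) {G : E → E}
    (hG : Differentiable ℝ G) (hGζ : ∀ z, G (ζ • z) = ζ • G z) {Z : Finset E}
    (hZ : ∀ z ∈ Z, ζ • z ∈ Z) (h0 : 0 ∈ Z) (hreg : jacobian G 0 ≠ 0) : signedCount G Z ≠ 0 := by
  classical
  have hζ0 : ζ ≠ 0 := hζ.ne_zero (by lia)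
  have orbits : (p : ℤ) ∣ ∑ z ∈ Z.erase 0, (SignType.sign (jacobian G z) : ℤ) :=
    dvd_sum_of_smul_mem (by lia) hζ
      (fun z => by rw [jacobian_smul_eq hG hζ0 hGζ]) (Finset.notMem_erase 0 Z) fun z hz =>
        Finset.mem_erase.2 ⟨smul_ne_zero hζ0 (Finset.ne_of_mem_erase hz),
          hZ z (Finset.mem_of_mem_erase hz)⟩
  intro hcount
  rw [signedCount, ← Finset.sum_erase_add Z _ h0] at hcount
  have hunit : IsUnit (SignType.sign (jacobian G 0) : ℤ) := by
    obtain h | h := hreg.lt_or_gt <;> simp [h]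
  have hdvd : (p : ℤ) ∣ SignType.sign (jacobian G 0) :=
    (dvd_add_right orbits).1 (hcount ▸ dvd_zero _)
  have := Int.isUnit_iff.1 (isUnit_of_dvd_unit hdvd hunit)
  lia

end EquivariantZeros

section EquivariantPerturbation

variable {𝕜 E : Type*} [RCLike 𝕜] [NormedAddCommGroup E] [NormedSpace 𝕜 E] [NormedSpace ℝ E]
  [IsScalarTower ℝ 𝕜 E] [FiniteDimensional ℝ E]

theorem dense_setOf_regularZerosOn_sub_smul {G : E → E} (hG : ContDiff ℝ 1 G) {q : E → 𝕜}
    (hq : ContDiff ℝ 1 q) :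
    Dense {y | RegularZerosOn (fun w => G w - q w • y) {z | q z ≠ 0}} := by
  borelize E
  let f : E → E := fun z => (q z)⁻¹ • G z
  have hf {z : E} (hz : q z ≠ 0) : HasFDerivAt f (fderiv ℝ f z) z :=
    (((hq.differentiable one_ne_zero z).inv hz).smul
      (hG.differentiable one_ne_zero z)).hasFDerivAt
  have hnull : Measure.addHaar (f '' {z | q z ≠ 0 ∧ jacobian f z = 0}) = 0 :=
    addHaar_image_eq_zero_of_det_fderivWithin_eq_zero _
      (fun z hz => (hf hz.1).hasFDerivWithinAt) fun z hz => hz.2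
  refine (Measure.dense_of_ae (measure_eq_zero_iff_ae_notMem.1 hnull)).mono fun y hy z hz hGz => ?_
  have hfz : f z = y := by
    rw [show f z = (q z)⁻¹ • G z from rfl, sub_eq_zero.1 hGz, inv_smul_smul₀ hz]
  have hcongr : (fun w => G w - q w • y) =ᶠ[𝓝 z] fun w => q w • (f w - y) := by
    filter_upwards [hq.continuous.continuousAt.eventually_ne hz] with w hw
    rw [smul_sub, smul_inv_smul₀ hw]
  have hderiv : HasFDerivAt (fun w => q w • (f w - y)) _ z :=
    (hq.differentiable one_ne_zero z).hasFDerivAt.smul ((hf hz).sub_const y)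
  rw [jacobian_congr hcongr, jacobian_eq_of_hasFDerivAt hderiv, det_ne_zero_iff_forall_eq_zero]
  intro v hv
  have hf_jac : jacobian f z ≠ 0 := fun h => hy ⟨z, ⟨hz, h⟩, hfz⟩
  refine det_ne_zero_iff_forall_eq_zero.1 hf_jac v ?_
  simpa [hfz, show q z ≠ 0 from hz] using hv

theorem exists_jacobian_add_smul_ne_zero {F : E → E} (hF : Differentiable ℝ F) {K : Set E}
    (hK : IsCompact K) {δ : ℝ} (hδ : 0 < δ) (z : E) :
    ∃ c : ℝ, (∀ w ∈ K, ‖c • w‖ < δ) ∧ jacobian (fun w => F w + c • w) z ≠ 0 := by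
  have hsmall : ∀ᶠ c : ℝ in 𝓝 0, ∀ w ∈ K, ‖c • w‖ < δ := by
    refine hK.eventually_forall_of_forall_eventually fun w _ => ?_
    have : Continuous fun x : ℝ × E => ‖x.1 • x.2‖ := by fun_prop
    exact this.continuousAt.eventually_lt continuousAt_const (by simpa using hδ)
  obtain ⟨c, hc_det, hc⟩ := ((eventually_det_add_smul_id_ne_zero (fderiv ℝ F z)).and
    (hsmall.filter_mono nhdsWithin_le_nhds)).exists
  have hderiv : HasFDerivAt (fun w => F w + c • w) _ z :=
    (hF z).hasFDerivAt.add ((hasFDerivAt_id z).const_smul c)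
  exact ⟨c, hc, jacobian_eq_of_hasFDerivAt hderiv ▸ hc_det⟩

theorem exists_regularZerosOn_sub_pow_smul {G : E → E} (hG : ContDiff ℝ 1 G) {s : Set E}
    (hGs : RegularZerosOn G s) (ℓ : E →L[𝕜] 𝕜) {n : ℕ} (hn : 1 < n) {K : Set E} (hK : IsCompact K)
    {δ : ℝ} (hδ : 0 < δ) :
    ∃ y, (∀ z ∈ K, ‖ℓ z ^ n • y‖ < δ) ∧
      RegularZerosOn (fun z => G z - ℓ z ^ n • y) (s ∪ {z | ℓ z ≠ 0}) := by
  have hq : ContDiff ℝ 1 fun z => ℓ z ^ n := (ℓ.restrictScalars ℝ).contDiff.pow n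
  have hsmall : ∀ᶠ y : E in 𝓝 0, ∀ z ∈ K, ‖ℓ z ^ n • y‖ < δ := by
    refine hK.eventually_forall_of_forall_eventually fun z _ => ?_
    have : Continuous fun x : E × E => ‖ℓ x.2 ^ n • x.1‖ := by fun_prop
    exact this.continuousAt.eventually_lt continuousAt_const (by simpa using hδ)
  obtain ⟨y, hy_reg, hy⟩ := (dense_setOf_regularZerosOn_sub_smul hG hq).inter_nhds_nonempty hsmall
  refine ⟨y, hy, fun z hz hGz => ?_⟩
  by_cases hℓ : ℓ z = 0
  · have hderiv : HasFDerivAt (fun z => ℓ z ^ n • y) (0 : E →L[ℝ] E) z := by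
      refine (((ℓ.restrictScalars ℝ).hasFDerivAt.pow n).smul_const y).congr_fderiv ?_
      ext v
      simp [hℓ, Nat.sub_ne_zero_of_lt hn]
    have hjac : jacobian (fun z => G z - ℓ z ^ n • y) z = jacobian G z := by
      rw [jacobian_eq_of_hasFDerivAt ((hG.differentiable one_ne_zero z).hasFDerivAt.fun_sub hderiv),
        sub_zero, jacobian]
    rw [hjac]
    refine hGs z (hz.resolve_right fun h => h hℓ) ?_
    simpa [hℓ, (zero_lt_one.trans hn).ne'] using hGz
  · exact hy_reg z (pow_ne_zero n hℓ) hGz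

-- Each step subtracts a term `ℓ ^ (p + 1) • y`, which is equivariant. By Sard's theorem some small
-- `y` makes the zeros off the hyperplane `ℓ = 0` regular; on the hyperplane the term vanishes to
-- second order, so regular zeros there stay regular.
theorem exists_equivariant_regularZerosOn_approx {ζ : 𝕜} {p : ℕ} (hp : 0 < p) (hζ : ζ ^ p = 1)
    {F : E → E} (hF : ContDiff ℝ 1 F) (hFζ : ∀ z, F (ζ • z) = ζ • F z) {K : Set E}
    (hK : IsCompact K) (L : Finset (E →L[𝕜] 𝕜)) {δ : ℝ} (hδ : 0 < δ) :
    ∃ G : E → E, ContDiff ℝ 1 G ∧ (∀ z, G (ζ • z) = ζ • G z) ∧ (∀ z ∈ K, ‖G z - F z‖ < δ) ∧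
      RegularZerosOn G ({0} ∪ {z | ∃ ℓ ∈ L, ℓ z ≠ 0}) := by
  classical
  induction L using Finset.induction_on generalizing δ with
  | empty =>
    obtain ⟨c, hc, hreg⟩ :=
      exists_jacobian_add_smul_ne_zero (hF.differentiable one_ne_zero) hK hδ 0
    refine ⟨fun z => F z + c • z, hF.add (contDiff_id.const_smul c), fun z => ?_, ?_, ?_⟩
    · simp only [hFζ, smul_add, smul_comm ζ c]
    · simpa using hc
    · rintro z (rfl | ⟨ℓ, hℓ, -⟩) -
      · exact hreg
      · simp at hℓ
  | insert ℓ L _ ih =>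
    obtain ⟨G, hG, hGζ, hGF, hreg⟩ := ih (half_pos hδ)
    obtain ⟨y, hy, hreg'⟩ :=
      exists_regularZerosOn_sub_pow_smul hG hreg ℓ (Nat.lt_add_of_pos_left hp) hK (half_pos hδ)
    refine ⟨fun z => G z - ℓ z ^ (p + 1) • y,
      hG.sub (((ℓ.restrictScalars ℝ).contDiff.pow _).smul contDiff_const), fun z => ?_,
      fun z hz => ?_, fun z hz => hreg' z ?_⟩
    · simp only [hGζ, map_smul, smul_eq_mul, mul_pow, pow_succ ζ, hζ, one_mul, mul_smul, smul_sub]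
    · calc ‖G z - ℓ z ^ (p + 1) • y - F z‖ = ‖(G z - F z) - ℓ z ^ (p + 1) • y‖ := by
            rw [sub_right_comm]
        _ ≤ ‖G z - F z‖ + ‖ℓ z ^ (p + 1) • y‖ := norm_sub_le _ _
        _ < δ / 2 + δ / 2 := add_lt_add (hGF z hz) (hy z hz)
        _ = δ := add_halves δ
    · obtain rfl | ⟨ℓ', hℓ', hne⟩ := hz
      · exact .inl (.inl rfl)
      · obtain rfl | hℓ' := Finset.mem_insert.1 hℓ'
        · exact .inr hne
        · exact .inl (.inr ⟨ℓ', hℓ', hne⟩)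

theorem exists_equivariant_regularZeros_approx {ζ : 𝕜} {p : ℕ} (hp : 0 < p) (hζ : ζ ^ p = 1)
    {F : E → E} (hF : ContDiff ℝ 1 F) (hFζ : ∀ z, F (ζ • z) = ζ • F z) {K : Set E}
    (hK : IsCompact K) {δ : ℝ} (hδ : 0 < δ) :
    ∃ G : E → E, ContDiff ℝ 1 G ∧ (∀ z, G (ζ • z) = ζ • G z) ∧ (∀ z ∈ K, ‖G z - F z‖ < δ) ∧
      RegularZerosOn G univ := by
  classical
  have : FiniteDimensional 𝕜 E := Module.Finite.of_restrictScalars_finite ℝ 𝕜 E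
  let e := (Module.finBasis 𝕜 E).equivFunL
  let coord (i) : E →L[𝕜] 𝕜 := (ContinuousLinearMap.proj i).comp e.toContinuousLinearMap
  obtain ⟨G, hG, hGζ, hGF, hreg⟩ := exists_equivariant_regularZerosOn_approx hp hζ hF hFζ hK
    (Finset.univ.image coord) hδ
  refine ⟨G, hG, hGζ, hGF, fun z _ => hreg z ?_⟩
  refine or_iff_not_imp_left.2 fun hz => ?_
  obtain ⟨i, hi⟩ := Function.ne_iff.1 ((map_ne_zero_iff e e.injective).2 hz)
  exact ⟨coord i, Finset.mem_image_of_mem _ (Finset.mem_univ i), hi⟩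

theorem exists_mem_frontier_eq_zero_of_jacobian_eq_zero [Nontrivial E] {ζ : 𝕜} {p : ℕ} (hp : 1 < p)
    (hζ : IsPrimitiveRoot ζ p) {W : Set E} (hW : IsOpen W) (hWb : Bornology.IsBounded W)
    (hW0 : 0 ∈ W) (hWζ : ∀ z ∈ W, ζ • z ∈ W) {F : E → E} (hF : ContDiff ℝ 1 F)
    (hFζ : ∀ z, F (ζ • z) = ζ • F z) (hF_jac : ∀ z, jacobian F z = 0) :
    ∃ z ∈ frontier W, F z = 0 := by
  by_contra! hF0
  have hK : IsCompact (frontier W) := isCompact_frontier_of_isBounded hWb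
  obtain ⟨δ, hδ, hδF⟩ := hK.exists_forall_le' hF.continuous.norm.continuousOn
    fun z hz => norm_pos_iff.2 (hF0 z hz)
  obtain ⟨G, hG, hGζ, hGF, hreg⟩ :=
    exists_equivariant_regularZeros_approx (by lia) hζ.pow_eq_one hF hFζ hK hδ
  have hfin := RegularZerosOn.finite hG hWb.isCompact_closure fun z _ => hreg z trivial
  have hG0 : G 0 = 0 := by
    have : (ζ - 1) • G 0 = 0 := by
      rw [sub_smul, ← hGζ, smul_zero, one_smul, sub_self]
    exact (smul_eq_zero.1 this).resolve_left (sub_ne_zero.2 (hζ.ne_one hp))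
  refine signedCount_ne_zero hp hζ (hG.differentiable one_ne_zero) hGζ (Z := hfin.toFinset)
    (fun z hz => ?_) (by simpa [hG0] using subset_closure hW0) (hreg 0 trivial hG0) ?_
  · simp only [Finite.mem_toFinset, mem_ofPred_eq] at hz ⊢
    exact ⟨map_mem_closure (continuous_const_smul ζ) hz.1 hWζ, by rw [hGζ, hz.2, smul_zero]⟩
  · exact signedCount_eq_zero hF hG hF_jac hW hWb
      (fun z hz => (hGF z hz).trans_le (hδF z hz)) (fun z _ => hreg z trivial) (by simp)

end EquivariantPerturbation

section EquivariantSmoothing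

variable {𝕜 E V : Type*} [RCLike 𝕜] [NormedAddCommGroup E] [NormedSpace 𝕜 E]
  [NormedAddCommGroup V] [NormedSpace 𝕜 V]

/-- The average `p⁻¹ ∑_{j < p} ζ⁻ʲ f(ζʲ z)` of the conjugates of `f` under the action of a
`p`-th root of unity `ζ`; it projects maps onto equivariant maps. -/
def equivariantAverage (ζ : 𝕜) (p : ℕ) (f : E → V) (z : E) : V :=
  (p : 𝕜)⁻¹ • ∑ j ∈ Finset.range p, (ζ ^ j)⁻¹ • f (ζ ^ j • z)

theorem equivariantAverage_smul {ζ : 𝕜} {p : ℕ} (hp : p ≠ 0) (hζ : ζ ^ p = 1) (f : E → V) (z : E) :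
    equivariantAverage ζ p f (ζ • z) = ζ • equivariantAverage ζ p f z := by
  have hζ0 : ζ ≠ 0 := by rintro rfl; simp [hp] at hζ
  let term (j : ℕ) : V := (ζ ^ j)⁻¹ • f (ζ ^ j • z)
  have shift (j : ℕ) : (ζ ^ j)⁻¹ • f (ζ ^ j • ζ • z) = ζ • term (j + 1) := by
    rw [smul_smul, ← pow_succ, smul_smul, pow_succ', mul_inv, mul_inv_cancel_left₀ hζ0]
  have cyclic : ∑ j ∈ Finset.range p, term (j + 1) = ∑ j ∈ Finset.range p, term j := by
    have hterm : term p = term 0 := by simp [term, hζ]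
    rw [← add_left_inj (term 0), ← Finset.sum_range_succ', Finset.sum_range_succ, hterm]
  simp only [equivariantAverage, shift]
  rw [← Finset.smul_sum, cyclic, smul_comm]

theorem norm_equivariantAverage_sub_lt {ζ : 𝕜} {p : ℕ} (hp : p ≠ 0) (hζ : ζ ^ p = 1) {s : Set E}
    (hs : ∀ z ∈ s, ζ • z ∈ s) {f g : E → V} (hg : ∀ z ∈ s, g (ζ • z) = ζ • g z) {ε : ℝ}
    (hfg : ∀ z ∈ s, ‖f z - g z‖ < ε) {z : E} (hz : z ∈ s) :
    ‖equivariantAverage ζ p f z - g z‖ < ε := by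
  have norm_zeta_pow (j : ℕ) : ‖ζ ^ j‖ = 1 := by
    have hζ_fin : IsOfFinOrder ζ := isOfFinOrder_iff_pow_eq_one.2 ⟨p, Nat.pos_of_ne_zero hp, hζ⟩
    exact hζ_fin.pow.norm_eq_one
  have hg_pow (j : ℕ) : g (ζ ^ j • z) = ζ ^ j • g z := by
    induction j with
    | zero => simp
    | succ j ih =>
      rw [pow_succ', mul_smul, hg _ (pow_smul_mem_of_smul_mem hs hz j), ih, mul_smul]
  have hp𝕜 : (p : 𝕜) ≠ 0 := Nat.cast_ne_zero.2 hp
  have sub_eq : equivariantAverage ζ p f z - g z =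
      (p : 𝕜)⁻¹ • ∑ j ∈ Finset.range p, (ζ ^ j)⁻¹ • (f (ζ ^ j • z) - g (ζ ^ j • z)) := by
    have hne (j : ℕ) : ζ ^ j ≠ 0 := norm_ne_zero_iff.1 (by simp [norm_zeta_pow])
    simp_rw [smul_sub, hg_pow, inv_smul_smul₀ (hne _)]
    rw [Finset.sum_sub_distrib, Finset.sum_const, Finset.card_range, smul_sub,
      ← Nat.cast_smul_eq_nsmul 𝕜, inv_smul_smul₀ hp𝕜, equivariantAverage]
  calc ‖equivariantAverage ζ p f z - g z‖
      ≤ (p : ℝ)⁻¹ * ∑ j ∈ Finset.range p, ‖f (ζ ^ j • z) - g (ζ ^ j • z)‖ := by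
        rw [sub_eq, norm_smul, norm_inv, RCLike.norm_natCast]
        gcongr
        refine (norm_sum_le _ _).trans_eq (Finset.sum_congr rfl fun j _ => ?_)
        rw [norm_smul, norm_inv, norm_zeta_pow, inv_one, one_mul]
    _ < (p : ℝ)⁻¹ * ∑ _ ∈ Finset.range p, ε := by
        gcongr with j
        · simpa using hp
        · exact hfg _ (pow_smul_mem_of_smul_mem hs hz j)
    _ = ε := by
        rw [Finset.sum_const, Finset.card_range, nsmul_eq_mul,
          inv_mul_cancel_left₀ (Nat.cast_ne_zero.2 hp)]

variable [NormedSpace ℝ E] [IsScalarTower ℝ 𝕜 E] [NormedSpace ℝ V] [IsScalarTower ℝ 𝕜 V]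

theorem contDiff_equivariantAverage {n : WithTop ℕ∞} (ζ : 𝕜) (p : ℕ) {f : E → V}
    (hf : ContDiff ℝ n f) : ContDiff ℝ n (equivariantAverage ζ p f) :=
  (ContDiff.sum fun j _ =>
    (hf.comp (contDiff_id.const_smul (ζ ^ j))).const_smul (ζ ^ j)⁻¹).const_smul (p : 𝕜)⁻¹

theorem exists_contDiff_equivariant_approx [FiniteDimensional ℝ E] [FiniteDimensional ℝ V] (n : ℕ∞)
    {ζ : 𝕜} {p : ℕ} (hp : p ≠ 0) (hζ : ζ ^ p = 1) {s : Set E} (hs : IsClosed s)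
    (hsζ : ∀ z ∈ s, ζ • z ∈ s) {g : E → V} (hg : ContinuousOn g s)
    (hgζ : ∀ z ∈ s, g (ζ • z) = ζ • g z) {ε : ℝ} (hε : 0 < ε) :
    ∃ f : E → V, ContDiff ℝ n f ∧ (∀ z, f (ζ • z) = ζ • f z) ∧ ∀ z ∈ s, ‖f z - g z‖ < ε := by
  have : TietzeExtension V := TietzeExtension.of_tvs ℝ
  obtain ⟨g', hg'⟩ := ContinuousMap.exists_restrict_eq hs ⟨s.domRestrict g, hg.domRestrict⟩
  obtain ⟨f, hf, hfg', -⟩ :=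
    g'.continuous.exists_contDiff_approx n continuous_const fun _ => hε
  refine ⟨equivariantAverage ζ p f, contDiff_equivariantAverage ζ p hf,
    equivariantAverage_smul hp hζ f, fun z hz =>
    norm_equivariantAverage_sub_lt hp hζ hsζ hgζ (fun w hw => ?_) hz⟩
  rw [← dist_eq_norm, ← show g' w = g w from DFunLike.congr_fun hg' ⟨w, hw⟩]
  exact hfg' w

end EquivariantSmoothing

section BorsukUlam

variable {𝕜 E V : Type*} [RCLike 𝕜] [NormedAddCommGroup E] [NormedSpace 𝕜 E]
  [NormedAddCommGroup V] [NormedSpace 𝕜 V]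

theorem jacobian_clm_comp_eq_zero [NormedSpace ℝ E] [FiniteDimensional ℝ E] [NormedSpace ℝ V]
    {L : V →L[ℝ] E} (hL : ¬ Function.Surjective L) {f : E → V} (hf : Differentiable ℝ f) (z : E) :
    jacobian (fun w => L (f w)) z = 0 := by
  have hderiv : HasFDerivAt (fun w => L (f w)) (L ∘L fderiv ℝ f z) z :=
    L.hasFDerivAt.comp z (hf z).hasFDerivAt
  rw [jacobian_eq_of_hasFDerivAt hderiv]
  by_contra h
  have hinj : Function.Injective (L ∘L fderiv ℝ f z) :=
    (injective_iff_map_eq_zero _).2 (det_ne_zero_iff_forall_eq_zero.1 h)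
  exact hL (Function.Surjective.of_comp
    (LinearMap.injective_iff_surjective (f := (L ∘L fderiv ℝ f z : E →ₗ[ℝ] E)).1 hinj))

theorem exists_mem_frontier_eq_zero_of_finrank_lt [FiniteDimensional 𝕜 E] [FiniteDimensional 𝕜 V]
    (hVE : Module.finrank 𝕜 V < Module.finrank 𝕜 E) {ζ : 𝕜} {p : ℕ} (hp : 1 < p)
    (hζ : IsPrimitiveRoot ζ p) {W : Set E} (hW : IsOpen W) (hWb : Bornology.IsBounded W)
    (hW0 : 0 ∈ W) (hWζ : (fun z => ζ • z) '' W = W)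
    {g : E → V} (hg : ContinuousOn g (frontier W))
    (hgζ : ∀ z ∈ frontier W, g (ζ • z) = ζ • g z) :
    ∃ z ∈ frontier W, g z = 0 := by
  let _ := NormedSpace.restrictScalars ℝ 𝕜 E
  let _ := NormedSpace.restrictScalars ℝ 𝕜 V
  have : IsScalarTower ℝ 𝕜 E := IsScalarTower.of_compHom ℝ 𝕜 E
  have : IsScalarTower ℝ 𝕜 V := IsScalarTower.of_compHom ℝ 𝕜 V
  have : FiniteDimensional ℝ E := FiniteDimensional.trans ℝ 𝕜 E
  have : FiniteDimensional ℝ V := FiniteDimensional.trans ℝ 𝕜 V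
  have : Nontrivial E := (Module.finrank_pos_iff (R := 𝕜)).1 (Nat.zero_lt_of_lt hVE)
  have hfrζ : (fun z => ζ • z) '' frontier W = frontier W :=
    image_smul_frontier (hζ.ne_zero (by lia)) hWζ
  by_contra! hg0
  have hK : IsCompact (frontier W) := isCompact_frontier_of_isBounded hWb
  obtain ⟨ε, hε, hεg⟩ := hK.exists_forall_le' hg.norm fun z hz => norm_pos_iff.2 (hg0 z hz)
  obtain ⟨f, hf, hfζ, hfg⟩ := exists_contDiff_equivariant_approx 1 (by lia) hζ.pow_eq_one
    isClosed_frontier (image_subset_iff.1 hfrζ.le) hg hgζ hε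
  obtain ⟨L, hL⟩ : ∃ L : V →ₗ[𝕜] E, Function.Injective L :=
    Module.Free.exists_linearMap_injective_of_lift_rank_lt (by
      rw [← Module.finrank_eq_rank, ← Module.finrank_eq_rank]
      simpa only [Cardinal.lift_natCast, Nat.cast_lt] using hVE)
  have hL_surj : ¬ Function.Surjective L := fun h =>
    hVE.not_ge (LinearMap.finrank_le_finrank_of_surjective (f := L) h)
  let L' : V →L[ℝ] E := L.toContinuousLinearMap.restrictScalars ℝ
  obtain ⟨z, hz, hLz⟩ := exists_mem_frontier_eq_zero_of_jacobian_eq_zero hp hζ hW hWb hW0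
    (image_subset_iff.1 hWζ.le) (L'.contDiff.comp hf) (fun z => by simp [hfζ, L'])
    (jacobian_clm_comp_eq_zero hL_surj (hf.differentiable one_ne_zero))
  have hfz : f z = 0 := hL (hLz.trans (map_zero L).symm)
  have := hfg z hz
  rw [hfz, zero_sub, norm_neg] at this
  exact this.not_ge (hεg z hz)

end BorsukUlam

section Index

variable {X : Type*} [TopologicalSpace X]

theorem le_gammaIdx_iff {p m : ℕ} {σ : X → X} {A : Set X} :
    (m : ℕ∞) ≤ gammaIdx p σ A ↔ ∀ (k : ℕ) (h : X → Fin k → ℂ), ContinuousOn h A →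
      (∀ x ∈ A, h x ≠ 0) → (∀ x ∈ A, h (σ x) = Complex.exp (2 * π * Complex.I / p) • h x) →
      m ≤ k := by
  simp only [gammaIdx, le_sInf_iff, forall_mem_image, Nat.cast_le]
  exact ⟨fun H k h hc h0 hσ => H ⟨h, hc, h0, hσ⟩, fun H k ⟨h, hc, h0, hσ⟩ => H k h hc h0 hσ⟩

theorem gammaIdx_ge_of_sphere_map_general (p : ℕ) (hp : 1 < p) (σ : X → X) (m : ℕ)
    (W : Set (Fin m → ℂ)) (hWopen : IsOpen W) (hW0 : (0 : Fin m → ℂ) ∈ W)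
    (hWbdd : Bornology.IsBounded W)
    (hWrot : (fun z : Fin m → ℂ => Complex.exp (2 * π * Complex.I / p) • z) '' W = W)
    (Ψ : (Fin m → ℂ) → X) (hΨc : ContinuousOn Ψ (frontier W))
    (hΨeq : ∀ z ∈ frontier W,
      Ψ (Complex.exp (2 * π * Complex.I / p) • z) = σ (Ψ z)) :
    IsCompact (Ψ '' frontier W) ∧ σ '' (Ψ '' frontier W) = Ψ '' frontier W ∧
    (m : ℕ∞) ≤ gammaIdx p σ (Ψ '' frontier W) := by
  refine ⟨(isCompact_frontier_of_isBounded hWbdd).image_of_continuousOn hΨc, ?_,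
    le_gammaIdx_iff.2 fun k h hc h0 hσ => ?_⟩
  · rw [image_image, ← image_congr hΨeq, ← image_image Ψ,
      image_smul_frontier (Complex.exp_ne_zero _) hWrot]
  · by_contra! hkm
    obtain ⟨z, hz, hhz⟩ := exists_mem_frontier_eq_zero_of_finrank_lt (g := h ∘ Ψ)
      (by simpa using hkm) hp (Complex.isPrimitiveRoot_exp p (by lia)) hWopen hWbdd hW0 hWrot
      (hc.comp hΨc (mapsTo_image _ _)) fun z hz => by
        rw [Function.comp_apply, hΨeq z hz, hσ _ (mem_image_of_mem Ψ hz), Function.comp_apply]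
    exact h0 _ (mem_image_of_mem Ψ hz) hhz

end Index

end SphereMaps

/-- Proposition 2.5 (f): if `S` is the boundary of a bounded open
`e^{2πi/p}`-invariant neighborhood of `0` in `ℂ^m` and `Ψ : S → X` is continuous and
equivariant, then `γ(Ψ(S)) ≥ m`. -/
theorem gammaIdx_ge_of_sphere_map
    {X : Type*} [TopologicalSpace X] [T2Space X] (p : ℕ) (hp : p.Prime)
    (σ : X → X) (hσc : Continuous σ) (hσp : σ^[p] = id)
    (m : ℕ) (hm : 1 ≤ m)
    (W : Set (Fin m → ℂ)) (hWopen : IsOpen W) (hW0 : (0 : Fin m → ℂ) ∈ W)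
    (hWbdd : Bornology.IsBounded W)
    (hWrot : (fun z : Fin m → ℂ => Complex.exp (2 * π * Complex.I / p) • z) '' W = W)
    (Ψ : (Fin m → ℂ) → X) (hΨc : ContinuousOn Ψ (frontier W))
    (hΨeq : ∀ z ∈ frontier W,
      Ψ (Complex.exp (2 * π * Complex.I / p) • z) = σ (Ψ z)) :
    IsCompact (Ψ '' frontier W) ∧ σ '' (Ψ '' frontier W) = Ψ '' frontier W ∧
    (m : ℕ∞) ≤ gammaIdx p σ (Ψ '' frontier W) :=
  gammaIdx_ge_of_sphere_map_general p hp.one_lt σ m W hWopen hW0 hWbdd hWrot Ψ hΨc hΨeq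

end
end

section
/- Assume β < 0. Let û ∈ C²(Ω) ∩ C¹(Ω̄) satisfy −Δ_k û(x) + û(x) = û(x)³ + β û(x) û(−x)² for all x ∈ Ω. If for every H ∈ ℋ₀ the polarization û_H also belongs to C²(Ω) ∩ C¹(Ω̄) and satisfies the same equation pointwise in Ω, then û is foliated Schwarz symmetric with respect to some unit vector e. -/
noncomputable section

open Real MeasureTheory Finset

abbrev Euc (n : ℕ) := EuclideanSpace ℝ (Fin n)

/-- The rotation `R_θ` by angle `θ` in the `(x₁,x₂)`-plane (fixing remaining coordinates). -/
def rotPt {n : ℕ} (θ : ℝ) (x : Euc n) : Euc n :=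
  WithLp.toLp 2 fun i => if (i : ℕ) = 0 then Real.cos θ * x i - Real.sin θ * x ⟨1 % n, Nat.mod_lt 1 i.pos⟩
    else if (i : ℕ) = 1 then Real.sin θ * x ⟨0, i.pos⟩ + Real.cos θ * x i
    else x i

/-- `u` is `𝓡_θ`-invariant on `Ω`, i.e. `u (R_{-θ} x) = u x` on `Ω`. -/
def RotInv {n : ℕ} (θ : ℝ) (Ω : Set (Euc n)) (u : Euc n → ℝ) : Prop :=
  ∀ x ∈ Ω, u (rotPt (-θ) x) = u x

def IsRadialFn {n : ℕ} (Ω : Set (Euc n)) (u : Euc n → ℝ) : Prop :=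
  ∀ x ∈ Ω, ∀ y ∈ Ω, ‖x‖ = ‖y‖ → u x = u y

/-- `Ω` is an open ball or an open annulus centered at the origin. -/
def RadialDomain {n : ℕ} (Ω : Set (Euc n)) : Prop :=
  (∃ R : ℝ, 0 < R ∧ Ω = Metric.ball (0 : Euc n) R) ∨
  (∃ r R : ℝ, 0 < r ∧ r < R ∧ Ω = {x : Euc n | r < ‖x‖ ∧ ‖x‖ < R})

/-- The Laplacian of `u`. -/
def lap {n : ℕ} (u : Euc n → ℝ) (x : Euc n) : ℝ :=
  ∑ i : Fin n, fderiv ℝ (fun y => fderiv ℝ u y (EuclideanSpace.single i 1)) x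
    (EuclideanSpace.single i 1)

/-- The squared `H¹` norm. -/
def H1norm2 {n : ℕ} (Ω : Set (Euc n)) (u : Euc n → ℝ) : ℝ :=
  ∫ x in Ω, (‖fderiv ℝ u x‖ ^ 2 + (u x) ^ 2)

/-- 1-based block cyclic shift `π`. -/
def blockCycle (p : ℕ) (j : ℕ) : ℕ := if j % p = 0 then j + 1 - p else j + 1

/-- Assumptions (A)-(D). -/
def SysAssump (N p B : ℕ) (lam mu : ℕ → ℝ) (beta : ℕ → ℕ → ℝ) : Prop :=
  p.Prime ∧ N = p * B ∧ 0 < B ∧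
  -- (A)
  (∀ b ∈ Finset.Icc 1 B, ∀ i ∈ Finset.Icc (p * b - p + 1) (p * b),
    lam i = lam (p * b) ∧ 0 < lam i) ∧
  -- (B)
  (∀ i ∈ Finset.Icc 1 N, ∀ j ∈ Finset.Icc 1 N, i ≠ j → beta i j = beta j i ∧ beta i j ≤ 0) ∧
  (∀ j ∈ Finset.Icc 1 N, 0 < mu j) ∧
  -- (C)
  (∀ i ∈ Finset.Icc 1 N, ∀ j ∈ Finset.Icc 1 N, i ≠ j →
    beta (blockCycle p i) (blockCycle p j) = beta i j) ∧
  -- (D)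
  (∀ b ∈ Finset.Icc 1 B, ∀ j ∈ Finset.Icc (p * b - p + 1) (p * b),
    mu j + ∑ i ∈ (Finset.Icc (p * b - p + 1) (p * b)).erase j, beta i j ≤ 0)

/-- Classical solution of the system (S). -/
def IsClassicalSolution {n : ℕ} (Ω : Set (Euc n)) (N : ℕ) (lam mu : ℕ → ℝ)
    (beta : ℕ → ℕ → ℝ) (u : ℕ → Euc n → ℝ) : Prop :=
  ∀ j ∈ Finset.Icc 1 N,
    ContDiffOn ℝ 2 (u j) Ω ∧ ContinuousOn (u j) (closure Ω) ∧
    (∀ x ∈ frontier Ω, u j x = 0) ∧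
    (∀ x ∈ Ω, -(lap (u j) x) + lam j * u j x =
      mu j * (u j x) ^ 3 + ∑ m ∈ (Finset.Icc 1 N).erase j, beta j m * u j x * (u m x) ^ 2)


/-- Reflection across the hyperplane through `0` with unit normal `a`. -/
def reflH {n : ℕ} (a : Euc n) (x : Euc n) : Euc n := x - (2 * (inner ℝ a x : ℝ)) • a

/-- The polarization `u_H` of `u` with respect to the closed half-space
`H = {x | 0 ≤ ⟪a, x⟫}`. -/
def polr {n : ℕ} (a : Euc n) (u : Euc n → ℝ) (x : Euc n) : ℝ :=
  if 0 ≤ (inner ℝ a x : ℝ) then max (u x) (u (reflH a x)) else min (u x) (u (reflH a x))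

/-- The angular derivative `∂_θ u = x₁ ∂₂ u − x₂ ∂₁ u`. -/
def angDeriv (u : Euc 2 → ℝ) (x : Euc 2) : ℝ :=
  x 0 * fderiv ℝ u x (EuclideanSpace.single 1 1) - x 1 * fderiv ℝ u x (EuclideanSpace.single 0 1)

/-- The operator `Δ_k u = Δu + (k²−1)|x|^{−2} ∂_θ² u`. -/
def lapk (k : ℕ) (u : Euc 2 → ℝ) (x : Euc 2) : ℝ :=
  lap u x + ((k : ℝ) ^ 2 - 1) / ‖x‖ ^ 2 * angDeriv (angDeriv u) x

/-- `u` is foliated Schwarz symmetric with respect to the unit vector `e`: on each sphere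
`u(x)` depends only on the angle between `x` and `e` and is non-increasing in this angle. -/
def FoliatedSchwarz (Ω : Set (Euc 2)) (u : Euc 2 → ℝ) (e : Euc 2) : Prop :=
  ‖e‖ = 1 ∧ ∀ x ∈ Ω, ∀ y ∈ Ω, ‖x‖ = ‖y‖ → (inner ℝ e y : ℝ) ≤ (inner ℝ e x : ℝ) → u y ≤ u x

/-!
Fix a half-plane with inner normal `a`. Since `u` and its polarization solve the same equation,
twice the odd part of `polr a u - u`, called `s`, locally satisfies a linear differential inequality
`Δ_k s ≤ C s`; it is nonnegative on the open half-plane, so by the strong minimum principle it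
vanishes there identically or nowhere. Moreover, comparing the two equations at points where `u` and
`polr a u` agree shows that reflecting never increases `u` at `x` and at `-x` simultaneously. Hence,
for every half-plane, either `u ∘ σ ≤ u` on it, or `u x - u (-x)` strictly increases under the
reflection `σ` everywhere on it. A maximiser `e` of `u x - u (-x)` on a single circle excludes the
second case for all half-planes with `e` in their interior, which makes `e` the direction of the
symmetry axis.
-/

open Filter
open scoped Topology

section SecondDerivative

lemma iteratedDeriv_two_nonneg_of_isLocalMin {f : ℝ → ℝ} {t : ℝ} (hf : ContinuousAt f t)
    (hmin : IsLocalMin f t) : 0 ≤ iteratedDeriv 2 f t := by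
  rw [iteratedDeriv_succ, iteratedDeriv_one]
  by_contra! hneg
  have hmax : IsLocalMax f t := isLocalMax_of_deriv_deriv_neg hneg hmin.deriv_eq_zero hf
  have hconst : f =ᶠ[𝓝 t] fun _ => f t := by
    filter_upwards [hmin, hmax] with s h₁ h₂ using le_antisymm h₂ h₁
  have hderiv : deriv f =ᶠ[𝓝 t] fun _ => 0 := by simpa using hconst.deriv
  simp [hderiv.deriv_eq] at hneg

lemma iteratedDeriv_two_exp_neg_mul {h : ℝ → ℝ} {t : ℝ} (hh : ContDiffAt ℝ 2 h t) (α : ℝ) :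
    iteratedDeriv 2 (fun s => exp (-α * h s)) t =
      exp (-α * h t) * (α ^ 2 * deriv h t ^ 2 - α * iteratedDeriv 2 h t) := by
  have hfirst : deriv (fun s => exp (-α * h s)) =ᶠ[𝓝 t]
      fun s => exp (-α * h s) * (-α * deriv h s) := by
    filter_upwards [hh.eventually (by simp)] with s hs
    exact ((hs.differentiableAt (by simp)).hasDerivAt.const_mul (-α)).exp.deriv
  have hh₁ : HasDerivAt h (deriv h t) t := (hh.differentiableAt (by simp)).hasDerivAt
  have hh₂ : HasDerivAt (deriv h) (deriv (deriv h) t) t :=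
    ((hh.derivWithin (m := 1) (by norm_num)).differentiableAt (by simp)).hasDerivAt
  simp only [iteratedDeriv_succ, iteratedDeriv_zero]
  rw [hfirst.deriv_eq]
  refine ((hh₁.const_mul (-α)).exp.mul (hh₂.const_mul (-α))).deriv.trans ?_
  ring

lemma iteratedDeriv_two_comp_of_isIntegralCurve {E F : Type*} [NormedAddCommGroup E]
    [NormedSpace ℝ E] [NormedAddCommGroup F] [NormedSpace ℝ F] {γ : ℝ → E} {X : E → E} {t : ℝ}
    {g : E → F} (hγ : IsIntegralCurve γ fun _ => X) (hX : DifferentiableAt ℝ X (γ t))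
    (hg : ContDiffAt ℝ 2 g (γ t)) :
    iteratedDeriv 2 (fun s => g (γ s)) t =
      fderiv ℝ (fun y => fderiv ℝ g y (X y)) (γ t) (X (γ t)) := by
  have hfirst : deriv (fun s => g (γ s)) =ᶠ[𝓝 t] fun s => fderiv ℝ g (γ s) (X (γ s)) := by
    filter_upwards [(hγ t).continuousAt.eventually (hg.eventually (by simp))] with s hs
    exact ((hs.differentiableAt (by simp)).hasFDerivAt.comp_hasDerivAt s (hγ s)).deriv
  have hdiff : DifferentiableAt ℝ (fun y => fderiv ℝ g y (X y)) (γ t) :=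
    ((hg.fderiv_right (m := 1) (by norm_num)).differentiableAt (by simp)).clm_apply hX
  rw [iteratedDeriv_succ, iteratedDeriv_one, hfirst.deriv_eq]
  exact (hdiff.hasFDerivAt.comp_hasDerivAt t (hγ t)).deriv

end SecondDerivative

section Operator

variable {k : ℕ} {f g : Euc 2 → ℝ} {x : Euc 2}

/-- The generator `∂_θ` of the rotations of the plane, as a vector field: `x` turned by a right
angle. -/
def angularField (x : Euc 2) : Euc 2 :=
  x 0 • EuclideanSpace.single 1 1 - x 1 • EuclideanSpace.single 0 1

lemma angDeriv_eq_fderiv (g : Euc 2 → ℝ) :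
    angDeriv g = fun x => fderiv ℝ g x (angularField x) := by
  ext x
  simp only [angDeriv, angularField, map_sub, map_smul, smul_eq_mul]

lemma differentiable_angularField : Differentiable ℝ angularField := by
  unfold angularField
  fun_prop

lemma inner_angularField (x y : Euc 2) :
    inner ℝ (angularField x) (angularField y) = inner ℝ x y := by
  simp only [PiLp.inner_apply, angularField, PiLp.sub_apply, PiLp.smul_apply, PiLp.single_apply,
    Fin.sum_univ_two, RCLike.inner_apply, conj_trivial, smul_eq_mul, zero_ne_one, one_ne_zero,
    if_true, if_false]
  ring

lemma rotPt_eq (t : ℝ) (x : Euc 2) : rotPt t x = cos t • x + sin t • angularField x := by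
  ext i
  fin_cases i <;> simp [rotPt, angularField] <;> ring

lemma rotPt_zero (x : Euc 2) : rotPt 0 x = x := by
  simp [rotPt_eq]

lemma rotPt_neg (t : ℝ) (x : Euc 2) : rotPt t (-x) = -rotPt t x := by
  simp only [rotPt_eq, angularField, PiLp.neg_apply]
  module

lemma contDiff_rotPt (x : Euc 2) {n : WithTop ℕ∞} : ContDiff ℝ n fun t => rotPt t x := by
  simp only [rotPt_eq]
  fun_prop

lemma isIntegralCurve_rotPt (x : Euc 2) :
    IsIntegralCurve (fun t => rotPt t x) fun _ => angularField := by
  intro t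
  have hrot : angularField (rotPt t x) = -sin t • x + cos t • angularField x := by
    ext i
    fin_cases i <;> simp [rotPt, angularField] <;> ring
  simp only [rotPt_eq] at hrot ⊢
  rw [hrot]
  exact ((hasDerivAt_cos t).smul_const x).add ((hasDerivAt_sin t).smul_const _)

lemma isIntegralCurve_line (x v : Euc 2) :
    IsIntegralCurve (fun t : ℝ => x + t • v) fun _ _ => v := fun t => by
  simpa using ((hasDerivAt_id t).smul_const v).const_add x

/- At the origin the convention `_ / 0 = 0` removes the rotational term. -/
lemma lapk_eq_iteratedDeriv (hg : ContDiffAt ℝ 2 g x) :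
    lapk k g x = ∑ i, iteratedDeriv 2 (fun t : ℝ => g (x + t • EuclideanSpace.single i 1)) 0 +
      ((k : ℝ) ^ 2 - 1) / ‖x‖ ^ 2 * iteratedDeriv 2 (fun t => g (rotPt t x)) 0 := by
  have hline (i : Fin 2) := iteratedDeriv_two_comp_of_isIntegralCurve (t := 0)
    (isIntegralCurve_line x (EuclideanSpace.single i 1)) (differentiableAt_const _)
    (by simpa using hg)
  have hcircle := iteratedDeriv_two_comp_of_isIntegralCurve (t := 0) (isIntegralCurve_rotPt x)
    differentiable_angularField.differentiableAt (by simpa [rotPt_zero] using hg)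
  simp only [zero_smul, add_zero] at hline
  simp only [rotPt_zero] at hcircle
  simp only [lapk, lap, angDeriv_eq_fderiv, hline, hcircle]

lemma contDiffAt_comp_line (hg : ContDiffAt ℝ 2 g x) (v : Euc 2) :
    ContDiffAt ℝ 2 (fun t : ℝ => g (x + t • v)) 0 :=
  ContDiffAt.comp _ (by simpa using hg) (by fun_prop)

lemma contDiffAt_comp_rotPt (hg : ContDiffAt ℝ 2 g x) :
    ContDiffAt ℝ 2 (fun t => g (rotPt t x)) 0 :=
  ContDiffAt.comp _ (by simpa [rotPt_zero] using hg) (contDiff_rotPt x).contDiffAt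

lemma lapk_congr (h : f =ᶠ[𝓝 x] g) : lapk k f x = lapk k g x := by
  have hang : angDeriv f =ᶠ[𝓝 x] angDeriv g := by
    filter_upwards [h.fderiv (𝕜 := ℝ)] with y hy
    simp only [angDeriv, hy]
  have hpartial (v : Euc 2) : (fun y => fderiv ℝ f y v) =ᶠ[𝓝 x] fun y => fderiv ℝ g y v :=
    h.fderiv.fun_comp (· v)
  simp only [lapk, lap, angDeriv, (hpartial _).fderiv_eq]
  simp only [hang.fderiv_eq]

lemma lapk_sub (hf : ContDiffAt ℝ 2 f x) (hg : ContDiffAt ℝ 2 g x) :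
    lapk k (fun y => f y - g y) x = lapk k f x - lapk k g x := by
  rw [lapk_eq_iteratedDeriv hf, lapk_eq_iteratedDeriv hg, lapk_eq_iteratedDeriv (hf.sub hg)]
  simp only [iteratedDeriv_fun_sub (contDiffAt_comp_line hf _) (contDiffAt_comp_line hg _),
    iteratedDeriv_fun_sub (contDiffAt_comp_rotPt hf) (contDiffAt_comp_rotPt hg),
    Finset.sum_sub_distrib]
  ring

lemma lapk_const_mul (hf : ContDiffAt ℝ 2 f x) (c : ℝ) :
    lapk k (fun y => c * f y) x = c * lapk k f x := by
  rw [lapk_eq_iteratedDeriv hf, lapk_eq_iteratedDeriv (contDiffAt_const.mul hf)]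
  simp only [iteratedDeriv_const_mul_field, ← Finset.mul_sum]
  ring

lemma lapk_comp_neg (hf : ContDiffAt ℝ 2 f (-x)) :
    lapk k (fun y => f (-y)) x = lapk k f (-x) := by
  have hfneg : ContDiffAt ℝ 2 (fun y => f (-y)) x := hf.comp x contDiff_neg.contDiffAt
  have hline (v : Euc 2) : (fun t : ℝ => f (-(x + t • v))) = fun t => f (-x + -t • v) := by
    simp only [neg_add, neg_smul]
  have hreverse (v : Euc 2) := iteratedDeriv_comp_neg 2 (fun t : ℝ => f (-x + t • v)) 0
  simp only [lapk_eq_iteratedDeriv hf, lapk_eq_iteratedDeriv hfneg, hline, hreverse, rotPt_neg,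
    norm_neg]
  simp

lemma sq_sub_one_div_norm_sq_nonneg (hk : 1 ≤ k) (x : Euc 2) :
    0 ≤ ((k : ℝ) ^ 2 - 1) / ‖x‖ ^ 2 :=
  div_nonneg (sub_nonneg.2 (one_le_pow₀ (mod_cast hk))) (by positivity)

lemma lapk_nonneg_of_isLocalMin (hk : 1 ≤ k) (hg : ContDiffAt ℝ 2 g x) (hmin : IsLocalMin g x) :
    0 ≤ lapk k g x := by
  have hcurve {γ : ℝ → Euc 2} (hγ : Continuous γ) (h₀ : γ 0 = x) :
      0 ≤ iteratedDeriv 2 (fun t => g (γ t)) 0 :=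
    iteratedDeriv_two_nonneg_of_isLocalMin
      (ContinuousAt.comp (h₀ ▸ hg.continuousAt) hγ.continuousAt)
      (IsMinFilter.comp_tendsto
        (h₀.symm ▸ hmin : IsLocalMin g (γ 0)) (by simpa [h₀] using hγ.tendsto 0))
  rw [lapk_eq_iteratedDeriv hg]
  exact add_nonneg (Finset.sum_nonneg fun i _ => hcurve (by fun_prop) (by simp))
    (mul_nonneg (sq_sub_one_div_norm_sq_nonneg hk x)
      (hcurve (contDiff_rotPt x (n := 0)).continuous (rotPt_zero x)))

lemma lapk_exp_neg_mul (hf : ContDiffAt ℝ 2 f x) (α : ℝ) :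
    lapk k (fun y => exp (-α * f y)) x = exp (-α * f x) *
      (α ^ 2 * (∑ i, fderiv ℝ f x (EuclideanSpace.single i 1) ^ 2 +
        ((k : ℝ) ^ 2 - 1) / ‖x‖ ^ 2 * angDeriv f x ^ 2) - α * lapk k f x) := by
  have hdf := (hf.differentiableAt (by simp)).hasFDerivAt
  have hline (i : Fin 2) : deriv (fun t : ℝ => f (x + t • EuclideanSpace.single i 1)) 0 =
      fderiv ℝ f x (EuclideanSpace.single i 1) :=
    (HasFDerivAt.comp_hasDerivAt 0 (by simpa using hdf) (isIntegralCurve_line x _ 0)).deriv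
  have hcircle : deriv (fun t => f (rotPt t x)) 0 = angDeriv f x := by
    rw [← rotPt_zero x] at hdf
    rw [angDeriv_eq_fderiv]
    refine (hdf.comp_hasDerivAt 0 (isIntegralCurve_rotPt x 0)).deriv.trans ?_
    simp only [rotPt_zero]
  rw [lapk_eq_iteratedDeriv hf, lapk_eq_iteratedDeriv (contDiffAt_const.mul hf).exp]
  simp only [iteratedDeriv_two_exp_neg_mul (contDiffAt_comp_line hf _),
    iteratedDeriv_two_exp_neg_mul (contDiffAt_comp_rotPt hf), hline, hcircle, zero_smul, add_zero,
    rotPt_zero, Fin.sum_univ_two]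
  ring

lemma contDiff_norm_sub_sq (p : Euc 2) {n : WithTop ℕ∞} :
    ContDiff ℝ n fun y => ‖y - p‖ ^ 2 :=
  (contDiff_id.sub contDiff_const).norm_sq ℝ

lemma fderiv_norm_sub_sq (p x v : Euc 2) :
    fderiv ℝ (fun y => ‖y - p‖ ^ 2) x v = 2 * inner ℝ (x - p) v := by
  have h : HasFDerivAt (fun y => y - p) (.id ℝ _) x := (hasFDerivAt_id x).sub_const p
  rw [h.norm_sq.fderiv]
  simp [-map_sub]

lemma sum_fderiv_norm_sub_sq_sq (p x : Euc 2) :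
    ∑ i, fderiv ℝ (fun y => ‖y - p‖ ^ 2) x (EuclideanSpace.single i 1) ^ 2 = 4 * ‖x - p‖ ^ 2 := by
  rw [EuclideanSpace.real_norm_sq_eq]
  simp only [fderiv_norm_sub_sq, EuclideanSpace.inner_single_right, Fin.sum_univ_two, conj_trivial]
  ring

lemma fderiv_two_mul_inner (p w x v : Euc 2) :
    fderiv ℝ (fun y => 2 * inner ℝ (y - p) w) x v = 2 * inner ℝ v w := by
  have h : HasFDerivAt (fun y => y - p) (.id ℝ _) x := (hasFDerivAt_id x).sub_const p
  rw [((h.inner ℝ (hasFDerivAt_const w x)).const_mul 2).fderiv]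
  simp

lemma angDeriv_norm_sub_sq (p : Euc 2) :
    angDeriv (fun y => ‖y - p‖ ^ 2) = fun y => 2 * inner ℝ (y - p) (angularField p) := by
  ext y
  simp only [angDeriv, fderiv_norm_sub_sq, angularField, inner_sub_right, inner_smul_right,
    EuclideanSpace.inner_single_right, PiLp.sub_apply, conj_trivial]
  ring

lemma lapk_norm_sub_sq (k : ℕ) (p x : Euc 2) :
    lapk k (fun y => ‖y - p‖ ^ 2) x =
      4 + ((k : ℝ) ^ 2 - 1) / ‖x‖ ^ 2 * (2 * inner ℝ x p) := by
  have hang : angDeriv (angDeriv fun y => ‖y - p‖ ^ 2) x = 2 * inner ℝ x p := by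
    rw [angDeriv_norm_sub_sq]
    simp only [angDeriv_eq_fderiv, fderiv_two_mul_inner, inner_angularField]
  rw [lapk, hang, lap]
  norm_num [fderiv_norm_sub_sq, fderiv_two_mul_inner]

end Operator

section MinimumPrinciple

variable {k : ℕ} {K D : Set (Euc 2)} {g s : Euc 2 → ℝ} {p : Euc 2} {c C ρ : ℝ}

lemma continuousOn_lapk_norm_sub_sq (k : ℕ) (p : Euc 2) :
    ContinuousOn (lapk k fun y => ‖y - p‖ ^ 2) {0}ᶜ := by
  refine ContinuousOn.congr ?_ fun x _ => lapk_norm_sub_sq k p x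
  have hne : ∀ x ∈ ({0}ᶜ : Set (Euc 2)), ‖x‖ ^ 2 ≠ 0 := fun x hx => by simpa using hx
  fun_prop (disch := assumption)

lemma exists_mul_exp_lt_lapk_exp (hk : 1 ≤ k) (hK : IsCompact K) (h₀ : 0 ∉ K) (hp : p ∉ K)
    (C : ℝ) :
    ∃ α > 0, ∀ x ∈ K,
      C * exp (-α * ‖x - p‖ ^ 2) < lapk k (fun y => exp (-α * ‖y - p‖ ^ 2)) x := by
  obtain ⟨m, hm, hmK⟩ : ∃ m, 0 < m ∧ ∀ x ∈ K, m ≤ 4 * ‖x - p‖ ^ 2 :=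
    hK.exists_forall_le' (by fun_prop) fun x hx => by
      have : 0 < ‖x - p‖ := norm_sub_pos_iff.2 (ne_of_mem_of_not_mem hx hp)
      positivity
  obtain ⟨M, hM⟩ := hK.exists_bound_of_continuousOn
    ((continuousOn_lapk_norm_sub_sq k p).mono (Set.subset_compl_singleton_iff.2 h₀))
  have hgrow : Tendsto (fun α : ℝ => α * (α * m - M)) atTop atTop :=
    tendsto_id.atTop_mul_atTop₀
      (tendsto_atTop_add_const_right _ _ (tendsto_id.atTop_mul_const hm))
  obtain ⟨α, hαC, hα⟩ := ((hgrow.eventually_gt_atTop C).and (eventually_gt_atTop 0)).exists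
  refine ⟨α, hα, fun x hx => ?_⟩
  have hcoef := sq_sub_one_div_norm_sq_nonneg hk x
  have hlap := (le_abs_self _).trans (hM x hx)
  rw [lapk_exp_neg_mul (contDiff_norm_sub_sq p).contDiffAt, mul_comm C, sum_fderiv_norm_sub_sq_sq]
  gcongr
  calc C < α ^ 2 * m - α * M := by linarith
    _ ≤ _ := by
      gcongr
      exact (hmK x hx).trans (le_add_of_nonneg_right (by positivity))

lemma le_of_lapk_neg (hk : 1 ≤ k) (hK : IsCompact K) (hg : ContinuousOn g K)
    (h : ∀ x ∈ K, g x < c → K ∈ 𝓝 x ∧ ContDiffAt ℝ 2 g x ∧ lapk k g x < 0) :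
    ∀ x ∈ K, c ≤ g x := by
  by_contra! hneg
  obtain ⟨x, hxK, hx⟩ := hneg
  obtain ⟨x₀, hx₀K, hmin⟩ := hK.exists_isMinOn ⟨x, hxK⟩ hg
  obtain ⟨hnhds, hcd, hlap⟩ := h x₀ hx₀K ((hmin hxK).trans_lt hx)
  exact hlap.not_ge (lapk_nonneg_of_isLocalMin hk hcd (hmin.isLocalMin hnhds))

/- The ball `ball p ρ₀` is cut out because `exp (-α ‖y - p‖²)` is a strict subsolution only away
from `p`; there `s` is bounded below by `δ` instead. -/
lemma exists_barrier_le_of_lapk_le (hk : 1 ≤ k) (h₀ : 0 ∉ Metric.closedBall p ρ)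
    (hs : ∀ x ∈ Metric.closedBall p ρ, ContDiffAt ℝ 2 s x)
    (hnonneg : ∀ x ∈ Metric.closedBall p ρ, 0 ≤ s x) (hC : 0 ≤ C)
    (hle : ∀ x ∈ Metric.closedBall p ρ, lapk k s x ≤ C * s x)
    {ρ₀ δ : ℝ} (hρ₀ : 0 < ρ₀) (hδ : 0 < δ) (hcore : ∀ x ∈ Metric.closedBall p ρ₀, δ < s x) :
    ∃ α > 0, ∀ x ∈ Metric.closedBall p ρ \ Metric.ball p ρ₀,
      δ * (exp (-α * ‖x - p‖ ^ 2) - exp (-α * ρ ^ 2)) ≤ s x := by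
  have hcompact := (isCompact_closedBall p ρ).diff (Metric.isOpen_ball (x := p) (ε := ρ₀))
  obtain ⟨α, hα, hsub⟩ := exists_mul_exp_lt_lapk_exp hk hcompact (p := p)
    (fun h => h₀ h.1) (fun h => h.2 (Metric.mem_ball_self hρ₀)) C
  set b : Euc 2 → ℝ := fun y => exp (-α * ‖y - p‖ ^ 2)
  have hbsmooth : ContDiff ℝ 2 b := (contDiff_const.mul (contDiff_norm_sub_sq p)).exp
  refine ⟨α, hα, fun x hx => ?_⟩
  suffices h : -(δ * exp (-α * ρ ^ 2)) ≤ s x - δ * b x by linarith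
  refine le_of_lapk_neg (g := fun y => s y - δ * b y) hk hcompact
    (fun y hy => ((hs y hy.1).continuousAt.sub (by fun_prop)).continuousWithinAt)
    (fun y hy hlt => ⟨?_, (hs y hy.1).sub (by fun_prop), ?_⟩) x hx
  · have hinside : y ∈ Metric.ball p ρ := by
      have hexp : exp (-α * ρ ^ 2) < b y :=
        lt_of_mul_lt_mul_left (by linarith [hnonneg y hy.1]) hδ.le
      have hsq : ‖y - p‖ ^ 2 < ρ ^ 2 := by
        simpa only [b, exp_lt_exp, neg_mul, neg_lt_neg_iff, mul_lt_mul_iff_right₀ hα] using hexp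
      exact mem_ball_iff_norm.2
        (lt_of_pow_lt_pow_left₀ 2 (dist_nonneg.trans (Metric.mem_closedBall.1 hy.1)) hsq)
    have houtside : y ∉ Metric.closedBall p ρ₀ := fun hycore => by
      have hb_le : b y ≤ 1 := exp_le_one_iff.2 (by nlinarith [sq_nonneg ‖y - p‖])
      have := mul_le_mul_of_nonneg_left hb_le hδ.le
      have := mul_pos hδ (exp_pos (-α * ρ ^ 2))
      linarith [hcore y hycore]
    exact mem_of_superset
      ((Metric.isOpen_ball.sdiff Metric.isClosed_closedBall).mem_nhds ⟨hinside, houtside⟩)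
      (Set.sdiff_subset_sdiff Metric.ball_subset_closedBall Metric.ball_subset_closedBall)
  · rw [lapk_sub (hs y hy.1) (by fun_prop), lapk_const_mul hbsmooth.contDiffAt]
    have := hle y hy.1
    have := mul_lt_mul_of_pos_left (hsub y hy) hδ
    have : C * (s y - δ * b y) ≤ 0 :=
      mul_nonpos_of_nonneg_of_nonpos hC (hlt.le.trans (neg_nonpos.2 (by positivity)))
    linarith

lemma pos_on_ball_of_lapk_le (hk : 1 ≤ k) (h₀ : 0 ∉ Metric.closedBall p ρ)
    (hs : ∀ x ∈ Metric.closedBall p ρ, ContDiffAt ℝ 2 s x)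
    (hnonneg : ∀ x ∈ Metric.closedBall p ρ, 0 ≤ s x) (hC : 0 ≤ C)
    (hle : ∀ x ∈ Metric.closedBall p ρ, lapk k s x ≤ C * s x) (hp : 0 < s p) :
    ∀ x ∈ Metric.ball p ρ, 0 < s x := by
  intro x hx
  have hpmem : p ∈ Metric.closedBall p ρ :=
    Metric.mem_closedBall_self (dist_nonneg.trans (Metric.mem_ball.1 hx).le)
  obtain ⟨δ, hδ, hδp⟩ := exists_between hp
  obtain ⟨ρ₀, hρ₀, hcore⟩ : ∃ ρ₀ > 0, ∀ y ∈ Metric.closedBall p ρ₀, δ < s y :=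
    Metric.nhds_basis_closedBall.mem_iff.1 ((hs p hpmem).continuousAt.eventually_const_lt hδp)
  by_cases hxcore : x ∈ Metric.ball p ρ₀
  · exact hδ.trans (hcore x (Metric.ball_subset_closedBall hxcore))
  obtain ⟨α, hα, hbarrier⟩ := exists_barrier_le_of_lapk_le hk h₀ hs hnonneg hC hle hρ₀ hδ hcore
  have hlt : exp (-α * ρ ^ 2) < exp (-α * ‖x - p‖ ^ 2) := by
    have := mem_ball_iff_norm.1 hx
    simp only [neg_mul]
    gcongr
  exact (mul_pos hδ (sub_pos.2 hlt)).trans_le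
    (hbarrier x ⟨Metric.ball_subset_closedBall hx, hxcore⟩)

lemma eq_zero_or_pos_of_lapk_le (hk : 1 ≤ k) (hD : IsOpen D) (hDconn : IsPreconnected D)
    (h₀ : 0 ∉ D) (hs : ContDiffOn ℝ 2 s D) (hnonneg : ∀ x ∈ D, 0 ≤ s x)
    (hle : ∀ x ∈ D, ∃ C, ∀ᶠ y in 𝓝 x, lapk k s y ≤ C * s y) :
    (∀ x ∈ D, s x = 0) ∨ ∀ x ∈ D, 0 < s x := by
  by_cases! hzero : ∀ x ∈ D, s x = 0
  · exact Or.inl hzero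
  obtain ⟨x₀, hx₀D, hx₀⟩ := hzero
  refine Or.inr fun x hx => (hDconn.subset_of_closure_inter_subset (u := D ∩ s ⁻¹' Set.Ioi 0)
    (hs.continuousOn.isOpen_inter_preimage hD isOpen_Ioi)
    ⟨x₀, hx₀D, hx₀D, (hnonneg x₀ hx₀D).lt_of_ne' hx₀⟩ ?_ hx).2
  rintro y ⟨hyclos, hyD⟩
  obtain ⟨C, hC⟩ := hle y hyD
  obtain ⟨ε, hε, hball⟩ := Metric.eventually_nhds_iff_ball.1 (hC.and (hD.mem_nhds hyD))
  obtain ⟨p, ⟨hpD, hp⟩, hyp⟩ := Metric.mem_closure_iff.1 hyclos (ε / 2) (by positivity)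
  have hsub : Metric.closedBall p (ε / 2) ⊆ Metric.ball y ε := fun z hz => by
    have := dist_triangle z p y
    rw [dist_comm] at hyp
    rw [Metric.mem_closedBall] at hz
    exact Metric.mem_ball.2 (by linarith)
  have hsubD : Metric.closedBall p (ε / 2) ⊆ D := fun z hz => (hball z (hsub hz)).2
  refine ⟨hyD, pos_on_ball_of_lapk_le hk (fun h => h₀ (hsubD h))
    (fun z hz => hs.contDiffAt (hD.mem_nhds (hsubD hz))) (fun z hz => hnonneg z (hsubD hz))
    (abs_nonneg C) (fun z hz => (hball z (hsub hz)).1.trans ?_) hp y hyp⟩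
  exact mul_le_mul_of_nonneg_right (le_abs_self C) (hnonneg z (hsubD hz))

end MinimumPrinciple

section Reflection

variable {n : ℕ} {a x y : Euc n} {u : Euc n → ℝ}

lemma reflH_eq_reflection (ha : ‖a‖ = 1) (x : Euc n) : reflH a x = (ℝ ∙ a)ᗮ.reflection x := by
  rw [Submodule.reflection_orthogonal_apply, Submodule.reflection_singleton_apply, reflH, ha]
  simp [mul_smul, two_smul]

lemma norm_reflH (ha : ‖a‖ = 1) (x : Euc n) : ‖reflH a x‖ = ‖x‖ := by
  rw [reflH_eq_reflection ha, LinearIsometryEquiv.norm_map]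

lemma reflH_reflH (ha : ‖a‖ = 1) (x : Euc n) : reflH a (reflH a x) = x := by
  simp only [reflH_eq_reflection ha, Submodule.reflection_reflection]

lemma inner_reflH (ha : ‖a‖ = 1) (x : Euc n) : inner ℝ a (reflH a x) = -inner ℝ a x := by
  simp only [reflH, inner_sub_right, inner_smul_right, real_inner_self_eq_norm_sq, ha]
  ring

lemma reflH_neg (a x : Euc n) : reflH a (-x) = -reflH a x := by
  simp only [reflH, inner_neg_right]
  module

lemma continuous_reflH (a : Euc n) : Continuous (reflH a) := by
  unfold reflH
  fun_prop

lemma exists_reflH_eq (hxy : ‖x‖ = ‖y‖) (hne : x ≠ y) :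
    ∃ a : Euc n, ‖a‖ = 1 ∧ 0 < inner ℝ a x ∧ reflH a x = y := by
  have hpos : 0 < ‖x - y‖ := norm_sub_pos_iff.2 hne
  have hinner : 2 * inner ℝ (x - y) x = ‖x - y‖ ^ 2 := by
    rw [norm_sub_sq_real, ← hxy, inner_sub_left, real_inner_self_eq_norm_sq, real_inner_comm]
    ring
  refine ⟨‖x - y‖⁻¹ • (x - y), norm_smul_inv_norm (sub_ne_zero.2 hne), ?_, ?_⟩
  · rw [real_inner_smul_left]
    have := pow_pos hpos 2
    exact mul_pos (inv_pos.2 hpos) (by linarith)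
  · have hscale : 2 * (‖x - y‖⁻¹ * inner ℝ (x - y) x) * ‖x - y‖⁻¹ = 1 := by
      rw [mul_left_comm, hinner]
      field_simp
    rw [reflH, real_inner_smul_left, smul_smul, hscale]
    module

lemma polr_eq_of_mul_pos (h : 0 < (u x - u (reflH a x)) * inner ℝ a x) : polr a u x = u x := by
  rcases pos_and_pos_or_neg_and_neg_of_mul_pos h with ⟨hu, ha⟩ | ⟨hu, ha⟩
  · rw [polr, if_pos ha.le, max_eq_left (sub_pos.1 hu).le]
  · rw [polr, if_neg ha.not_ge, min_eq_left (sub_neg.1 hu).le]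

lemma polr_eq_reflH_of_mul_neg (h : (u x - u (reflH a x)) * inner ℝ a x < 0) :
    polr a u x = u (reflH a x) := by
  rcases mul_neg_iff.1 h with ⟨hu, ha⟩ | ⟨hu, ha⟩
  · rw [polr, if_neg ha.not_ge, min_eq_right (sub_pos.1 hu).le]
  · rw [polr, if_pos ha.le, max_eq_right (sub_neg.1 hu).le]

lemma polr_eventuallyEq (hx : ContinuousAt u x) (hrefl : ContinuousAt u (reflH a x))
    (h : 0 < (u x - u (reflH a x)) * inner ℝ a x) : polr a u =ᶠ[𝓝 x] u := by
  have hcont : ContinuousAt (fun y => (u y - u (reflH a y)) * inner ℝ a y) x :=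
    (hx.sub (hrefl.comp (continuous_reflH a).continuousAt)).mul (by fun_prop)
  filter_upwards [hcont.eventually_const_lt h] with y hy using polr_eq_of_mul_pos hy

lemma polr_sub_self_of_inner_pos (h : 0 < inner ℝ a x) :
    polr a u x - u x = max 0 (u (reflH a x) - u x) := by
  rw [polr, if_pos h.le, ← max_sub_sub_right, sub_self]

lemma polr_neg_sub_self_of_inner_pos (h : 0 < inner ℝ a x) :
    polr a u (-x) - u (-x) = min 0 (u (-reflH a x) - u (-x)) := by
  have hneg : inner ℝ a (-x) < 0 := by rwa [inner_neg_right, neg_lt_zero]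
  rw [polr, if_neg hneg.not_ge, reflH_neg, ← min_sub_sub_right, sub_self]

end Reflection

section RadialSet

variable {n : ℕ} {Ω : Set (Euc n)} {a x : Euc n}

/-- Invariance under all rotations and reflections fixing the origin: membership depends only on
the norm. -/
def IsRadialSet (Ω : Set (Euc n)) : Prop := ∀ ⦃x y⦄, ‖x‖ = ‖y‖ → x ∈ Ω → y ∈ Ω

lemma IsRadialSet.neg_mem (hΩ : IsRadialSet Ω) (hx : x ∈ Ω) : -x ∈ Ω :=
  hΩ (norm_neg x).symm hx

lemma IsRadialSet.reflH_mem (hΩ : IsRadialSet Ω) (ha : ‖a‖ = 1) (hx : x ∈ Ω) : reflH a x ∈ Ω :=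
  hΩ (norm_reflH ha x).symm hx

lemma RadialDomain.isRadialSet (hΩ : RadialDomain Ω) : IsRadialSet Ω := by
  rcases hΩ with ⟨R, -, rfl⟩ | ⟨r, R, -, -, rfl⟩ <;> intro x y hxy <;> simp [hxy]

lemma RadialDomain.isOpen (hΩ : RadialDomain Ω) : IsOpen Ω := by
  rcases hΩ with ⟨R, -, rfl⟩ | ⟨r, R, -, -, rfl⟩
  · exact Metric.isOpen_ball
  · exact (isOpen_lt continuous_const continuous_norm).inter
      (isOpen_lt continuous_norm continuous_const)

lemma convex_setOf_inner_pos (a : Euc n) : Convex ℝ {x | 0 < inner ℝ a x} :=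
  convex_halfSpace_gt (innerSL ℝ a).isLinear 0

lemma ne_zero_of_inner_pos (h : 0 < inner ℝ a x) : x ≠ 0 := by
  rintro rfl
  simp at h

/- In polar coordinates the set is a product of an interval of radii and a convex set of
directions. -/
lemma IsRadialSet.isPreconnected_inter_halfSpace (hΩ : IsRadialSet Ω) (hconn : IsPreconnected Ω)
    (a : Euc n) : IsPreconnected (Ω ∩ {x | 0 < inner ℝ a x}) := by
  set radii : Set ℝ := norm '' Ω ∩ Set.Ioi 0
  have hradii : Convex ℝ radii :=
    (hconn.image _ continuous_norm.continuousOn).ordConnected.convex.inter (convex_Ioi 0)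
  have hpolar : ContinuousOn (fun q : ℝ × Euc n => (q.1 / ‖q.2‖) • q.2)
      (radii ×ˢ {v | 0 < inner ℝ a v}) := by
    have hne : ∀ q ∈ radii ×ˢ {v | 0 < inner ℝ a v}, ‖q.2‖ ≠ 0 := fun q hq =>
      norm_ne_zero_iff.2 (ne_zero_of_inner_pos hq.2)
    fun_prop (disch := assumption)
  convert (hradii.prod (convex_setOf_inner_pos a)).isPreconnected.image _ hpolar
  ext x
  constructor
  · rintro ⟨hx, hax⟩
    have hnorm : 0 < ‖x‖ := norm_pos_iff.2 (ne_zero_of_inner_pos hax)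
    exact ⟨(‖x‖, x), ⟨⟨Set.mem_image_of_mem _ hx, hnorm⟩, hax⟩, by simp [hnorm.ne']⟩
  · rintro ⟨⟨_, v⟩, ⟨⟨⟨z, hz, rfl⟩, hzpos⟩, hv : 0 < inner ℝ a v⟩, rfl⟩
    have hvnorm : 0 < ‖v‖ := norm_pos_iff.2 (ne_zero_of_inner_pos hv)
    refine ⟨hΩ ?_ hz, ?_⟩
    · simp [norm_smul, hvnorm.ne']
    · simpa [inner_smul_right] using mul_pos (div_pos hzpos hvnorm) hv

lemma isPreconnected_sphere_two (r : ℝ) : IsPreconnected (Metric.sphere (0 : Euc 2) r) :=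
  isPreconnected_sphere (by simp [← Module.finrank_eq_rank]) 0 r

lemma RadialDomain.isPreconnected {Ω : Set (Euc 2)} (hΩ : RadialDomain Ω) :
    IsPreconnected Ω := by
  rcases hΩ with ⟨R, -, rfl⟩ | ⟨r, R, hr, -, rfl⟩
  · exact (convex_ball 0 R).isPreconnected
  · convert ((convex_Ioo r R).isPreconnected.prod (isPreconnected_sphere_two 1)).image
      (fun q : ℝ × Euc 2 => q.1 • q.2) (by fun_prop)
    ext x
    constructor
    · rintro ⟨hrx, hxR⟩
      have hx : 0 < ‖x‖ := hr.trans hrx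
      exact ⟨(‖x‖, ‖x‖⁻¹ • x), ⟨⟨hrx, hxR⟩, by simp [norm_smul, hx.ne']⟩,
        by simp [smul_smul, hx.ne']⟩
    · rintro ⟨⟨t, v⟩, ⟨ht, hv⟩, rfl⟩
      have hv : ‖v‖ = 1 := mem_sphere_zero_iff_norm.1 hv
      simpa [norm_smul, hv, abs_of_pos (hr.trans ht.1)] using ht

end RadialSet

section LocalLipschitz

variable {X E F : Type*} [TopologicalSpace X] [NormedAddCommGroup E] [NormedSpace ℝ E]
  [ProperSpace E] [NormedAddCommGroup F] [NormedSpace ℝ F]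

lemma exists_eventually_norm_sub_comp_le {H : E → F} (hH : ContDiff ℝ 1 H) {V W : X → E} {x : X}
    (hV : ContinuousAt V x) (hW : ContinuousAt W x) :
    ∃ C : ℝ, ∀ᶠ y in 𝓝 x, ‖H (V y) - H (W y)‖ ≤ C * ‖V y - W y‖ := by
  obtain ⟨r, hVr, hWr⟩ : ∃ r, ‖V x‖ < r ∧ ‖W x‖ < r :=
    ⟨max ‖V x‖ ‖W x‖ + 1, by linarith [le_max_left ‖V x‖ ‖W x‖],
      by linarith [le_max_right ‖V x‖ ‖W x‖]⟩
  obtain ⟨C, hC⟩ := hH.contDiffOn.exists_lipschitzOnWith one_ne_zero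
    (convex_closedBall (0 : E) r) (isCompact_closedBall 0 r)
  refine ⟨C, ?_⟩
  filter_upwards [hV.norm.eventually_lt_const hVr, hW.norm.eventually_lt_const hWr]
    with y hVy hWy
  exact hC.norm_sub_le (mem_closedBall_zero_iff.2 hVy.le) (mem_closedBall_zero_iff.2 hWy.le)

end LocalLipschitz

/-- A classical solution `v` of `-Δ_k v + v = v³ + β v v(-·)²` on `Ω`, without any condition on the
boundary. -/
structure IsReducedSolution (k : ℕ) (β : ℝ) (Ω : Set (Euc 2)) (v : Euc 2 → ℝ) : Prop where
  contDiffOn : ContDiffOn ℝ 2 v Ω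
  eq : ∀ x ∈ Ω, -(lapk k v x) + v x = v x ^ 3 + β * v x * v (-x) ^ 2

namespace IsReducedSolution

variable {k : ℕ} {β : ℝ} {Ω : Set (Euc 2)} {u v : Euc 2 → ℝ} {a x y : Euc 2}

lemma contDiffAt (hu : IsReducedSolution k β Ω u) (hΩ : IsOpen Ω) (hx : x ∈ Ω) :
    ContDiffAt ℝ 2 u x :=
  hu.contDiffOn.contDiffAt (hΩ.mem_nhds hx)

lemma continuousAt (hu : IsReducedSolution k β Ω u) (hΩ : IsOpen Ω) (hx : x ∈ Ω) :
    ContinuousAt u x :=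
  (hu.contDiffAt hΩ hx).continuousAt

/- The coupling is the only nonlocal term of the equation. -/
lemma eq_zero_or_sq_eq_of_eventuallyEq (hβ : β ≠ 0) (hu : IsReducedSolution k β Ω u)
    (hv : IsReducedSolution k β Ω v) (hx : x ∈ Ω) (h : v =ᶠ[𝓝 x] u) :
    u x = 0 ∨ v (-x) ^ 2 = u (-x) ^ 2 := by
  have hvx := hv.eq x hx
  rw [lapk_congr h, h.eq_of_nhds] at hvx
  have hmul : β * (u x * (v (-x) ^ 2 - u (-x) ^ 2)) = 0 := by linarith [hu.eq x hx]
  simpa only [mul_eq_zero, hβ, false_or, sub_eq_zero] using hmul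

section Polarization

variable (hΩ : IsOpen Ω) (hrad : IsRadialSet Ω) (hβ : β ≠ 0) (hu : IsReducedSolution k β Ω u)
  (hpol : ∀ a, ‖a‖ = 1 → IsReducedSolution k β Ω (polr a u))

include hΩ hrad hβ hu hpol

lemma eq_zero_or_sq_reflH_eq (ha : ‖a‖ = 1) (hx : x ∈ Ω)
    (h : 0 < (u x - u (reflH a x)) * inner ℝ a x)
    (hneg : 0 < (u (-x) - u (-reflH a x)) * inner ℝ a x) :
    u x = 0 ∨ u (-reflH a x) ^ 2 = u (-x) ^ 2 := by
  have hpolneg : polr a u (-x) = u (-reflH a x) := by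
    rw [← reflH_neg]
    refine polr_eq_reflH_of_mul_neg ?_
    rw [reflH_neg, inner_neg_right]
    linarith
  rw [← hpolneg]
  exact eq_zero_or_sq_eq_of_eventuallyEq hβ hu (hpol a ha) hx
    (polr_eventuallyEq (hu.continuousAt hΩ hx) (hu.continuousAt hΩ (hrad.reflH_mem ha hx)) h)

lemma neg_antipode_of_lt_of_antipode_lt (hx : x ∈ Ω) (hxy : ‖x‖ = ‖y‖) (h : u x < u y)
    (hneg : u (-x) < u (-y)) : u (-y) = -u (-x) := by
  obtain ⟨a, ha, hay, hyx⟩ := exists_reflH_eq hxy.symm (ne_of_apply_ne u h.ne')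
  have hxy' : reflH a x = y := by rw [← hyx, reflH_reflH ha]
  have hax : inner ℝ a x < 0 := by simpa only [← hyx, inner_reflH ha, neg_neg_iff_pos] using hay
  have hyalt := eq_zero_or_sq_reflH_eq hΩ hrad hβ hu hpol ha (hrad hxy hx)
    (by rw [hyx]; exact mul_pos (sub_pos.2 h) hay)
    (by rw [hyx]; exact mul_pos (sub_pos.2 hneg) hay)
  have hxalt := eq_zero_or_sq_reflH_eq hΩ hrad hβ hu hpol ha hx
    (by rw [hxy']; exact mul_pos_of_neg_of_neg (sub_neg.2 h) hax)
    (by rw [hxy']; exact mul_pos_of_neg_of_neg (sub_neg.2 hneg) hax)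
  rw [hyx] at hyalt
  rw [hxy'] at hxalt
  have hsq : u (-y) ^ 2 = u (-x) ^ 2 := by
    rcases hyalt, hxalt with ⟨hy₀ | hsq, hx₀ | hsq'⟩ <;> linarith
  exact (sq_eq_sq_iff_eq_or_eq_neg.1 hsq).resolve_left hneg.ne'

/- If both increments were positive, then by `neg_antipode_of_lt_of_antipode_lt` the smaller one
would take a single positive value on the circle through `x`, although it is continuous there and
vanishes at `x`. -/
lemma antipode_le_of_lt (hx : x ∈ Ω) (hxy : ‖x‖ = ‖y‖) (h : u x < u y) : u (-y) ≤ u (-x) := by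
  by_contra! hneg
  set f : Euc 2 → ℝ := fun z => min (u z - u x) (u (-z) - u (-x)) with hf
  set c : ℝ := min (-u x - u x) (-u (-x) - u (-x)) with hc
  have hvalue : ∀ z, ‖x‖ = ‖z‖ → 0 < f z → f z = c := fun z hxz hfz => by
    obtain ⟨hz, hz'⟩ := lt_min_iff.1 hfz
    have hnegz := neg_antipode_of_lt_of_antipode_lt hΩ hrad hβ hu hpol hx hxz
      (sub_pos.1 hz) (sub_pos.1 hz')
    have hposz := neg_antipode_of_lt_of_antipode_lt (y := -z) hΩ hrad hβ hu hpol
      (hrad.neg_mem hx) (by simpa using hxz) (sub_pos.1 hz') (by simpa using hz)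
    simp only [neg_neg] at hposz
    simp only [hf, hc, hnegz, hposz]
  have hcont : ContinuousOn f (Metric.sphere 0 ‖x‖) := fun z hz => by
    have hzΩ : z ∈ Ω := hrad (mem_sphere_zero_iff_norm.1 hz).symm hx
    have hcomp : ContinuousAt (fun w => u (-w)) z :=
      (hu.continuousAt hΩ (hrad.neg_mem hzΩ)).comp continuous_neg.continuousAt
    have hfz : ContinuousAt f z :=
      ((hu.continuousAt hΩ hzΩ).sub continuousAt_const).min (hcomp.sub continuousAt_const)
    exact hfz.continuousWithinAt
  have hfx : f x = 0 := by simp [hf]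
  have hfy : 0 < f y := lt_min (sub_pos.2 h) (sub_pos.2 hneg)
  obtain ⟨z, hz, hfz⟩ := (isPreconnected_sphere_two ‖x‖).intermediate_value
    (mem_sphere_zero_iff_norm.2 rfl) (mem_sphere_zero_iff_norm.2 hxy.symm) hcont
    (show f y / 2 ∈ Set.Icc (f x) (f y) from ⟨by linarith, by linarith⟩)
  have hfzc := hvalue z (mem_sphere_zero_iff_norm.1 hz).symm (by linarith)
  linarith [hvalue y hxy hfy]

end Polarization

/- Subtracting the equations at `x` and `-x` leaves a `C¹` expression in the values of `v` and `u`
at these two points, hence the local Lipschitz bound. -/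
lemma exists_lapk_sub_comp_neg_le (hΩ : IsOpen Ω) (hrad : IsRadialSet Ω)
    (hu : IsReducedSolution k β Ω u) (hv : IsReducedSolution k β Ω v) (hx : x ∈ Ω) :
    ∃ C : ℝ, ∀ᶠ y in 𝓝 x, lapk k (fun z => (v z - u z) - (v (-z) - u (-z))) y ≤
      C * (|v y - u y| + |v (-y) - u (-y)|) := by
  set G : ℝ × ℝ → ℝ := fun p => p.1 - p.1 ^ 3 - β * p.1 * p.2 ^ 2
  set H : ℝ × ℝ → ℝ := fun p => G p - G p.swap with hH
  have hpair {w : Euc 2 → ℝ} (hw : IsReducedSolution k β Ω w) :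
      ContinuousAt (fun y => (w y, w (-y))) x :=
    (hw.continuousAt hΩ hx).prodMk
      ((hw.continuousAt hΩ (hrad.neg_mem hx)).comp continuous_neg.continuousAt)
  have hlapk {w : Euc 2 → ℝ} (hw : IsReducedSolution k β Ω w) {y : Euc 2} (hy : y ∈ Ω) :
      lapk k w y = G (w y, w (-y)) := by
    linarith [hw.eq y hy]
  obtain ⟨C, hC⟩ := exists_eventually_norm_sub_comp_le
    (show ContDiff ℝ 1 H by unfold H G; fun_prop) (hpair hv) (hpair hu)
  refine ⟨|C|, ?_⟩
  filter_upwards [hC, hΩ.mem_nhds hx] with y hCy hy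
  have hy' := hrad.neg_mem hy
  have hdiff {z : Euc 2} (hz : z ∈ Ω) : ContDiffAt ℝ 2 (fun z => v z - u z) z :=
    (hv.contDiffAt hΩ hz).sub (hu.contDiffAt hΩ hz)
  have hdiffneg : ContDiffAt ℝ 2 (fun z => v (-z) - u (-z)) y :=
    (hdiff hy').comp y contDiff_neg.contDiffAt
  calc lapk k (fun z => (v z - u z) - (v (-z) - u (-z))) y
      = (lapk k v y - lapk k u y) - (lapk k v (-y) - lapk k u (-y)) := by
        rw [lapk_sub (hdiff hy) hdiffneg,
          lapk_comp_neg (f := fun z => v z - u z) (hdiff hy'),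
          lapk_sub (hv.contDiffAt hΩ hy) (hu.contDiffAt hΩ hy),
          lapk_sub (hv.contDiffAt hΩ hy') (hu.contDiffAt hΩ hy')]
    _ = H (v y, v (-y)) - H (u y, u (-y)) := by
        simp only [hlapk hv hy, hlapk hu hy, hlapk hv hy', hlapk hu hy', neg_neg, hH,
          Prod.swap_prod_mk]
        ring
    _ ≤ C * ‖(v y, v (-y)) - (u y, u (-y))‖ := (le_abs_self _).trans hCy
    _ ≤ |C| * (|v y - u y| + |v (-y) - u (-y)|) := by
        gcongr
        · exact le_abs_self C
        · exact max_le_add_of_nonneg (abs_nonneg _) (abs_nonneg _)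

/- On the open half-space `polr a u - u` is nonnegative at `x` and nonpositive at `-x`, so its odd
part bounds both increments. -/
lemma polr_sub_antipode_eq_zero_or_pos (hΩ : IsOpen Ω) (hconn : IsPreconnected Ω)
    (hrad : IsRadialSet Ω) (hk : 1 ≤ k) (hu : IsReducedSolution k β Ω u)
    (hpol : IsReducedSolution k β Ω (polr a u)) :
    (∀ x ∈ Ω ∩ {x | 0 < inner ℝ a x}, (polr a u x - u x) - (polr a u (-x) - u (-x)) = 0) ∨
      ∀ x ∈ Ω ∩ {x | 0 < inner ℝ a x}, 0 < (polr a u x - u x) - (polr a u (-x) - u (-x)) := by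
  have hD : IsOpen (Ω ∩ {x | 0 < inner ℝ a x}) :=
    hΩ.inter (isOpen_lt continuous_const (by fun_prop))
  have hinc {x : Euc 2} (hx : 0 < inner ℝ a x) : 0 ≤ polr a u x - u x :=
    (polr_sub_self_of_inner_pos hx).ge.trans' (le_max_left _ _)
  have hdec {x : Euc 2} (hx : 0 < inner ℝ a x) : polr a u (-x) - u (-x) ≤ 0 :=
    (polr_neg_sub_self_of_inner_pos hx).le.trans (min_le_left _ _)
  have hdiff {x : Euc 2} (hx : x ∈ Ω) : ContDiffAt ℝ 2 (fun y => polr a u y - u y) x :=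
    (hpol.contDiffAt hΩ hx).sub (hu.contDiffAt hΩ hx)
  refine eq_zero_or_pos_of_lapk_le hk hD (hrad.isPreconnected_inter_halfSpace hconn a)
    (fun h => ne_zero_of_inner_pos h.2 rfl)
    (fun x hx => ((hdiff hx.1).sub
      ((hdiff (hrad.neg_mem hx.1)).comp x contDiff_neg.contDiffAt)).contDiffWithinAt)
    (fun x hx => sub_nonneg.2 ((hdec hx.2).trans (hinc hx.2))) fun x hx => ?_
  obtain ⟨C, hC⟩ := exists_lapk_sub_comp_neg_le hΩ hrad hu hpol hx.1
  refine ⟨C, ?_⟩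
  filter_upwards [hC, hD.mem_nhds hx] with y hCy hy
  rwa [abs_of_nonneg (hinc hy.2), abs_of_nonpos (hdec hy.2), ← sub_eq_add_neg] at hCy

lemma reflH_le_or_sub_antipode_lt (hΩ : IsOpen Ω) (hconn : IsPreconnected Ω)
    (hrad : IsRadialSet Ω) (hk : 1 ≤ k) (hβ : β ≠ 0) (hu : IsReducedSolution k β Ω u)
    (hpol : ∀ a, ‖a‖ = 1 → IsReducedSolution k β Ω (polr a u)) (ha : ‖a‖ = 1) :
    (∀ x ∈ Ω, 0 < inner ℝ a x → u (reflH a x) ≤ u x) ∨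
      ∀ x ∈ Ω, 0 < inner ℝ a x → u x - u (-x) < u (reflH a x) - u (-reflH a x) := by
  have hodd {x : Euc 2} (hax : 0 < inner ℝ a x) :
      (polr a u x - u x) - (polr a u (-x) - u (-x)) =
        max 0 (u (reflH a x) - u x) - min 0 (u (-reflH a x) - u (-x)) := by
    rw [polr_sub_self_of_inner_pos hax, polr_neg_sub_self_of_inner_pos hax]
  refine (polr_sub_antipode_eq_zero_or_pos hΩ hconn hrad hk hu (hpol a ha)).imp
    (fun hzero x hx hax => ?_) fun hpos x hx hax => ?_
  · have hx₀ := hzero x ⟨hx, hax⟩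
    rw [hodd hax] at hx₀
    linarith [le_max_right 0 (u (reflH a x) - u x), min_le_left 0 (u (-reflH a x) - u (-x))]
  · have hxpos := hpos x ⟨hx, hax⟩
    rw [hodd hax] at hxpos
    have hnorm : ‖x‖ = ‖reflH a x‖ := (norm_reflH ha x).symm
    have hle {y z : Euc 2} (hy : y ∈ Ω) (hyz : ‖y‖ = ‖z‖) (h : u y < u z) : u (-z) ≤ u (-y) :=
      antipode_le_of_lt hΩ hrad hβ hu hpol hy hyz h
    rcases lt_trichotomy (u x) (u (reflH a x)) with hlt | heq | hgt
    · linarith [hle hx hnorm hlt]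
    · have : min 0 (u (-reflH a x) - u (-x)) < 0 := by simpa [heq] using hxpos
      have : u (-reflH a x) - u (-x) < 0 := (min_lt_iff.1 this).resolve_left (lt_irrefl 0)
      linarith
    · have hle' := hle (hrad hnorm hx) hnorm.symm hgt
      simp [hgt.le, hle'] at hxpos

end IsReducedSolution

section Axis

variable {n : ℕ} {Ω : Set (Euc n)} {u : Euc n → ℝ} {a e : Euc n}

lemma reflH_le_of_inner_nonneg (hΩ : IsOpen Ω) (hrad : IsRadialSet Ω) (hu : ContinuousOn u Ω)
    (he : e ≠ 0)
    (h : ∀ a, ‖a‖ = 1 → 0 < inner ℝ a e → ∀ x ∈ Ω, 0 < inner ℝ a x → u (reflH a x) ≤ u x)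
    (ha : ‖a‖ = 1) (hae : 0 ≤ inner ℝ a e) : ∀ x ∈ Ω, 0 < inner ℝ a x → u (reflH a x) ≤ u x := by
  intro x hx hax
  set normal : ℝ → Euc n := fun t => ‖a + t • e‖⁻¹ • (a + t • e)
  have hnormal₀ : normal 0 = a := by simp [normal, ha]
  have hnormal : ContinuousAt normal 0 := by
    have : ‖a + (0 : ℝ) • e‖ ≠ 0 := by simp [ha]
    fun_prop (disch := assumption)
  have hcont : ContinuousAt (fun t => u (reflH (normal t) x)) 0 := by
    have hrefl : ContinuousAt (fun t => reflH (normal t) x) 0 := by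
      unfold reflH
      fun_prop
    refine ContinuousAt.comp (hu.continuousAt (hΩ.mem_nhds ?_)) hrefl
    exact hrad.reflH_mem (hnormal₀ ▸ ha) hx
  have hlim : Tendsto (fun t => u (reflH (normal t) x)) (𝓝[>] 0) (𝓝 (u (reflH a x))) := by
    simpa only [hnormal₀] using hcont.tendsto.mono_left nhdsWithin_le_nhds
  have hinner : ∀ᶠ t in 𝓝[>] 0, 0 < inner ℝ (normal t) x :=
    nhdsWithin_le_nhds ((hnormal.inner continuousAt_const).eventually_const_lt
      (by simpa only [hnormal₀] using hax))
  refine le_of_tendsto hlim ?_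
  filter_upwards [hinner, self_mem_nhdsWithin] with t hxt ht
  have hne : a + t • e ≠ 0 := fun h₀ => by simp [normal, h₀] at hxt
  refine h _ (norm_smul_inv_norm hne) ?_ x hx hxt
  rw [real_inner_smul_left, inner_add_left, real_inner_smul_left]
  have := mul_pos (Set.mem_Ioi.1 ht) (real_inner_self_pos.2 he)
  have := norm_pos_iff.2 hne
  positivity

lemma foliatedSchwarz_of_reflH_le {Ω : Set (Euc 2)} {u : Euc 2 → ℝ} {e : Euc 2} (he : ‖e‖ = 1)
    (h : ∀ a, ‖a‖ = 1 → 0 ≤ inner ℝ a e → ∀ x ∈ Ω, 0 < inner ℝ a x → u (reflH a x) ≤ u x) :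
    FoliatedSchwarz Ω u e := by
  refine ⟨he, fun x hx y _ hxy hle => ?_⟩
  rcases eq_or_ne x y with rfl | hne
  · rfl
  obtain ⟨a, ha, hax, rfl⟩ := exists_reflH_eq hxy hne
  refine h a ha ?_ x hx hax
  rw [reflH, inner_sub_right, inner_smul_right, real_inner_comm a e] at hle
  exact nonneg_of_mul_nonneg_right (by linarith) (mul_pos two_pos hax)

/- The axis points to a maximiser of `u z - u (-z)` on some circle: there the second alternative
fails for every half-plane having it as an interior point. -/
lemma exists_foliatedSchwarz_of_dichotomy {Ω : Set (Euc 2)} {u : Euc 2 → ℝ} (hΩ : IsOpen Ω)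
    (hrad : IsRadialSet Ω) (hu : ContinuousOn u Ω)
    (h : ∀ a, ‖a‖ = 1 → (∀ x ∈ Ω, 0 < inner ℝ a x → u (reflH a x) ≤ u x) ∨
      ∀ x ∈ Ω, 0 < inner ℝ a x → u x - u (-x) < u (reflH a x) - u (-reflH a x)) :
    ∃ e, FoliatedSchwarz Ω u e := by
  by_cases! hΩ₀ : ∀ x ∈ Ω, x = 0
  · refine ⟨EuclideanSpace.single 0 1, by simp, fun x hx y hy _ _ => ?_⟩
    rw [hΩ₀ x hx, hΩ₀ y hy]
  obtain ⟨p, hp, hp₀⟩ := hΩ₀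
  have hsphere : ∀ z ∈ Metric.sphere (0 : Euc 2) ‖p‖, z ∈ Ω := fun z hz =>
    hrad (mem_sphere_zero_iff_norm.1 hz).symm hp
  have hcont : ContinuousOn (fun z => u z - u (-z)) (Metric.sphere (0 : Euc 2) ‖p‖) :=
    (hu.mono hsphere).sub
      (hu.comp continuous_neg.continuousOn fun z hz => hrad.neg_mem (hsphere z hz))
  obtain ⟨e, he, hmax⟩ := (isCompact_sphere (0 : Euc 2) ‖p‖).exists_isMaxOn
    ⟨p, mem_sphere_zero_iff_norm.2 rfl⟩ hcont
  have henorm : ‖e‖ = ‖p‖ := mem_sphere_zero_iff_norm.1 he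
  have he₀ : 0 < ‖e‖ := henorm ▸ norm_pos_iff.2 hp₀
  have hpos (b : Euc 2) (hb : ‖b‖ = 1) (hbe : 0 < inner ℝ b e) :
      ∀ x ∈ Ω, 0 < inner ℝ b x → u (reflH b x) ≤ u x :=
    (h b hb).resolve_right fun hlt => (hlt e (hsphere e he) hbe).not_ge
      (hmax (mem_sphere_zero_iff_norm.2 ((norm_reflH hb e).trans henorm)))
  refine ⟨‖e‖⁻¹ • e, foliatedSchwarz_of_reflH_le (norm_smul_inv_norm (norm_pos_iff.1 he₀))
    fun b hb hbe => ?_⟩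
  rw [real_inner_smul_right] at hbe
  exact reflH_le_of_inner_nonneg hΩ hrad hu (norm_pos_iff.1 he₀) hpos hb
    (nonneg_of_mul_nonneg_right hbe (inv_pos.2 he₀))

end Axis

theorem foliated_schwarz_of_polarizations_solve_general {Ω : Set (Euc 2)} {k : ℕ} {β : ℝ}
    {u : Euc 2 → ℝ} (hΩ : IsOpen Ω) (hconn : IsPreconnected Ω) (hrad : IsRadialSet Ω)
    (hk : 1 ≤ k) (hβ : β ≠ 0) (hu : IsReducedSolution k β Ω u)
    (hpol : ∀ a, ‖a‖ = 1 → IsReducedSolution k β Ω (polr a u)) :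
    ∃ e, FoliatedSchwarz Ω u e :=
  exists_foliatedSchwarz_of_dichotomy hΩ hrad hu.contDiffOn.continuousOn fun _ =>
    hu.reflH_le_or_sub_antipode_lt hΩ hconn hrad hk hβ hpol

/-- Lemma 4.7 of the paper. If `û` solves the reduced equation and all
its polarizations with respect to half-spaces through `0` do as well, then `û` is foliated
Schwarz symmetric. -/
theorem foliated_schwarz_of_polarizations_solve
    (Ω : Set (Euc 2)) (hΩ : RadialDomain Ω) (k : ℕ) (hk : 1 ≤ k)
    (beta : ℝ) (hbeta : beta < 0)
    (u : Euc 2 → ℝ)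
    (hreg : ContDiffOn ℝ 2 u Ω ∧ ContDiffOn ℝ 1 u (closure Ω))
    (heq : ∀ x ∈ Ω, -(lapk k u x) + u x = (u x) ^ 3 + beta * u x * (u (-x)) ^ 2)
    (hpol : ∀ a : Euc 2, ‖a‖ = 1 →
      (ContDiffOn ℝ 2 (polr a u) Ω ∧ ContDiffOn ℝ 1 (polr a u) (closure Ω)) ∧
      ∀ x ∈ Ω, -(lapk k (polr a u) x) + polr a u x =
        (polr a u x) ^ 3 + beta * polr a u x * (polr a u (-x)) ^ 2) :
    ∃ e : Euc 2, FoliatedSchwarz Ω u e := by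
  exact foliated_schwarz_of_polarizations_solve_general hΩ.isOpen hΩ.isPreconnected
    hΩ.isRadialSet hk hbeta.ne ⟨hreg.1, heq⟩ fun a ha => ⟨(hpol a ha).1.1, (hpol a ha).2⟩

end
end
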